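/- arXiv:math/0403129 — 5 statements merged into one kernel-verified Lean document; each statement's English description precedes it below -/
import Mathlib

section
/- Let G be a group with a finite generating set S, and let H ≥ J be finite index normal subgroups of G. Let Σ be a generating set for H arising from S by the Reidemeister–Schreier process (i.e. the Schreier generating set of H associated to a Schreier transversal of H in G; in particular |Σ| ≤ |S|[G : H]). Then w(X(G/J; S)) ≤ w(X(H/J; Σ)) + 2|S|[G : H]. -/
/-- A (multi)graph: a type of vertices, a type of edges, and an endpoint map
(an edge with endpoints `(a, b)` joins `a` to `b`; edges are counted with
multiplicity). -/
structure MultiGraph where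
  V : Type*
  E : Type*
  ends : E → V × V

/-- `|∂A|`: the number of edges with exactly one endpoint in `A`. -/
noncomputable def MultiGraph.bdry (X : MultiGraph) (A : Set X.V) : ℕ :=
  Nat.card {e : X.E // Xor' ((X.ends e).1 ∈ A) ((X.ends e).2 ∈ A)}

/-- The width `w(X)` of a finite graph `X`: the minimum, over all linear orderings of
the vertices (bijections `Fin |V(X)| ≃ V(X)`), of the maximal value of `|∂D_n|`, where
`D_n` is the set of the first `n` vertices. -/
noncomputable def MultiGraph.width (X : MultiGraph) : ℕ :=
  sInf {w | ∃ e : Fin (Nat.card X.V) ≃ X.V,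
    ∀ n : ℕ, X.bdry (⇑e '' {m | (m : ℕ) < n}) ≤ w}

/-- The Cayley graph `X(G/N; S)` of the quotient of `G` by a normal subgroup `N`, with
respect to a finite generating set `S` of `G`: the vertex set is the quotient group
`G/N`, and for each vertex `v` and each `s ∈ S` there is one edge joining `v` to `v·s`
(edges counted with multiplicity, one for each pair `(v, s)`). -/
noncomputable def cayleyQuot (G : Type*) [Group G] (S : Finset G) (N : Subgroup G)
    (hN : N.Normal) : MultiGraph :=
  letI := hN
  { V := G ⧸ N
    E := (G ⧸ N) × {s // s ∈ S}
    ends := fun p => (p.1, p.1 * (QuotientGroup.mk (p.2 : G) : G ⧸ N)) }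

/-- The width of a finite graph is attained by some ordering of its vertices. -/
theorem MultiGraph.exists_ordering_bdry_le_width (X : MultiGraph) [Finite X.V] [Finite X.E] :
    ∃ e : Fin (Nat.card X.V) ≃ X.V, ∀ n : ℕ, X.bdry (⇑e '' {m | (m : ℕ) < n}) ≤ X.width :=
  Nat.sInf_mem (s := {w | ∃ e : Fin (Nat.card X.V) ≃ X.V,
    ∀ n : ℕ, X.bdry (⇑e '' {m | (m : ℕ) < n}) ≤ w})
    ⟨Nat.card X.E, (Finite.equivFin X.V).symm,
      fun _ => Nat.card_le_card_of_injective _ Subtype.val_injective⟩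

/-- If the vertices of `X` are fibred over those of `Y` with constant fibre `F`, the edges of `X`
inject compatibly into those of `Y`, and at most `c` edges of `X` meet each fibre, then
`w(X) ≤ w(Y) + c`. -/
theorem MultiGraph.width_le_width_add_of_fibration (X Y : MultiGraph) {F : Type*} [Finite F]
    [Finite Y.V] [Finite Y.E] (φ : X.V ≃ Y.V × F) (ψ : X.E → Y.E)
    (hψ : Function.Injective ψ)
    (hends : ∀ e, Y.ends (ψ e) = ((φ (X.ends e).1).1, (φ (X.ends e).2).1)) (c : ℕ)
    (hc : ∀ v, {e | (φ (X.ends e).1).1 = v ∨ (φ (X.ends e).2).1 = v}.ncard ≤ c) :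
    X.width ≤ Y.width + c := by
  have : Finite X.E := Finite.of_injective ψ hψ
  obtain ⟨o, ho⟩ := Y.exists_ordering_bdry_le_width
  have hcard : Nat.card X.V = Nat.card Y.V * Nat.card F := by
    rw [Nat.card_congr φ, Nat.card_prod]
  let o' : Fin (Nat.card X.V) ≃ X.V :=
    ((finCongr hcard).trans finProdFinEquiv.symm).trans
      ((Equiv.prodCongr o (Finite.equivFin F).symm).trans φ.symm)
  refine Nat.sInf_le ⟨o', fun n => ?_⟩
  set k := Nat.card F with hk
  have hmem : ∀ x : X.V, x ∈ ⇑o' '' {m | (m : ℕ) < n} ↔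
      ((Finite.equivFin F (φ x).2 : ℕ) + k * (o.symm (φ x).1 : ℕ) < n) := by
    intro x
    rw [Equiv.image_eq_preimage_symm]
    rfl
  have hmemY : ∀ y : Y.V, y ∈ ⇑o '' {m | (m : ℕ) < n / k} ↔ (o.symm y : ℕ) < n / k := by
    intro y
    rw [Equiv.image_eq_preimage_symm]
    rfl
  have hgen : ∀ x : X.V, (o.symm (φ x).1 : ℕ) ≠ n / k →
      (x ∈ ⇑o' '' {m | (m : ℕ) < n} ↔ (φ x).1 ∈ ⇑o '' {m | (m : ℕ) < n / k}) := by
    intro x hx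
    rw [hmem, hmemY]
    have hb : (Finite.equivFin F (φ x).2 : ℕ) < k := (Finite.equivFin F (φ x).2).2
    generalize (Finite.equivFin F (φ x).2 : ℕ) = b at *
    generalize (o.symm (φ x).1 : ℕ) = i at *
    have hdiv : (b + k * i) / k = i := by
      rw [Nat.add_mul_div_left _ _ (by lia), Nat.div_eq_of_lt hb, zero_add]
    constructor
    · intro h
      have := Nat.div_le_div_right (c := k) h.le
      lia
    · intro h
      by_contra! h'
      have := Nat.div_le_div_right (c := k) h'
      lia
  let B : Set X.E := {e | Xor ((φ (X.ends e).1).1 ∈ ⇑o '' {m | (m : ℕ) < n / k})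
    ((φ (X.ends e).2).1 ∈ ⇑o '' {m | (m : ℕ) < n / k})}
  let C : Set X.E := {e | (o.symm (φ (X.ends e).1).1 : ℕ) = n / k ∨
    (o.symm (φ (X.ends e).2).1 : ℕ) = n / k}
  have hsub : {e | Xor ((X.ends e).1 ∈ ⇑o' '' {m | (m : ℕ) < n})
      ((X.ends e).2 ∈ ⇑o' '' {m | (m : ℕ) < n})} ⊆ B ∪ C := by
    intro e he
    by_cases h : e ∈ C
    · exact Or.inr h
    · left
      obtain ⟨h1, h2⟩ := not_or.mp h
      simpa only [B, Set.mem_ofPred_eq, hgen _ h1, hgen _ h2] using he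
  have hB : B.ncard ≤ Y.width := by
    refine le_trans ?_ (ho (n / k))
    refine Nat.card_le_card_of_injective
      (fun e => ⟨ψ e.1, by rw [hends]; exact e.2⟩) fun a b hab => ?_
    exact Subtype.ext (hψ (congrArg Subtype.val hab))
  have hC : C.ncard ≤ c := by
    by_cases hm : n / k < Nat.card Y.V
    · refine le_trans (Set.ncard_le_ncard ?_) (hc (o ⟨n / k, hm⟩))
      rintro e (h | h)
      · exact Or.inl (o.symm_apply_eq.mp (Fin.ext h))
      · exact Or.inr (o.symm_apply_eq.mp (Fin.ext h))
    · have : C = ∅ := Set.eq_empty_of_forall_notMem fun e he => by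
        rcases he with h | h
        · exact hm (h ▸ (o.symm (φ (X.ends e).1).1).2)
        · exact hm (h ▸ (o.symm (φ (X.ends e).2).1).2)
      simp [this]
  calc X.bdry (⇑o' '' {m | (m : ℕ) < n}) ≤ (B ∪ C).ncard := Set.ncard_le_ncard hsub
    _ ≤ B.ncard + C.ncard := Set.ncard_union_le _ _
    _ ≤ Y.width + c := add_le_add hB hC

section Transversal

variable {G : Type*} [Group G] {H J : Subgroup G} {R : G → G}

theorem representative_idem (hR1 : ∀ g : G, g * (R g)⁻¹ ∈ H)
    (hR2 : ∀ g g' : G, g' * g⁻¹ ∈ H → R g' = R g) (g : G) : R (R g) = R g :=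
  hR2 _ _ (by simpa using H.inv_mem (hR1 g))

theorem representative_mul_left (hR2 : ∀ g g' : G, g' * g⁻¹ ∈ H → R g' = R g)
    {h : G} (hh : h ∈ H) (g : G) : R (h * g) = R g :=
  hR2 _ _ (by simpa using hh)

theorem representative_mul_right [H.Normal] (hR2 : ∀ g g' : G, g' * g⁻¹ ∈ H → R g' = R g)
    (g : G) {h : G} (hh : h ∈ H) : R (g * h) = R g :=
  hR2 _ _ (Subgroup.Normal.conj_mem inferInstance h hh g)

theorem representative_representative_mul (hR1 : ∀ g : G, g * (R g)⁻¹ ∈ H)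
    (hR2 : ∀ g g' : G, g' * g⁻¹ ∈ H → R g' = R g) (g s : G) : R (R g * s) = R (g * s) :=
  hR2 _ _ (by simpa [mul_assoc] using H.inv_mem (hR1 g))

theorem card_range_representative [H.Normal] (hR1 : ∀ g : G, g * (R g)⁻¹ ∈ H)
    (hR2 : ∀ g g' : G, g' * g⁻¹ ∈ H → R g' = R g) : Nat.card (Set.range R) = H.index := by
  refine Nat.card_congr (Equiv.ofBijective (fun t => (t.1 : G ⧸ H)) ⟨?_, ?_⟩)
  · rintro ⟨_, a, rfl⟩ ⟨_, b, rfl⟩ hab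
    refine Subtype.ext ?_
    have h := representative_mul_right hR2 (R a) (QuotientGroup.eq.mp hab)
    rw [mul_inv_cancel_left, representative_idem hR1 hR2, representative_idem hR1 hR2] at h
    exact h.symm
  · intro q
    induction q using QuotientGroup.induction_on with
    | H g =>
      refine ⟨⟨R g, g, rfl⟩, QuotientGroup.eq.mpr ?_⟩
      exact Subgroup.Normal.mem_comm inferInstance (hR1 g)

/-- The decomposition `G/J ≃ H/J × T` given by `h * t ↦ (h, t)`, for a transversal `T` of the right
cosets of `H`. -/
noncomputable def quotientEquivMapProdRange [H.Normal] [J.Normal] (hJH : J ≤ H)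
    (hR1 : ∀ g : G, g * (R g)⁻¹ ∈ H) (hR2 : ∀ g g' : G, g' * g⁻¹ ∈ H → R g' = R g) :
    G ⧸ J ≃ H.map (QuotientGroup.mk' J) × Set.range R where
  toFun := Quotient.lift
    (fun g => (⟨QuotientGroup.mk (g * (R g)⁻¹), Subgroup.mem_map.mpr ⟨_, hR1 g, rfl⟩⟩,
      ⟨R g, g, rfl⟩)) (by
      intro a b hab
      have hab' : (a : G ⧸ J) = b := Quotient.sound hab
      have hR : R b = R a := by
        simpa using representative_mul_right hR2 a (hJH (QuotientGroup.eq.mp hab'))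
      simp only [Prod.mk.injEq, Subtype.mk.injEq, hR, and_true]
      rw [QuotientGroup.mk_mul, QuotientGroup.mk_mul, hab'])
  invFun p := p.1 * (p.2 : G)
  left_inv q := by
    induction q using QuotientGroup.induction_on with
    | H g =>
      change ((g * (R g)⁻¹ : G) : G ⧸ J) * (R g : G ⧸ J) = g
      rw [← QuotientGroup.mk_mul, inv_mul_cancel_right]
  right_inv := by
    rintro ⟨⟨_, h, hh, rfl⟩, ⟨_, g, rfl⟩⟩
    have hR : R (h * R g) = R g :=
      (representative_mul_left hR2 hh _).trans (representative_idem hR1 hR2 g)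
    refine Prod.ext (Subtype.ext ?_) (Subtype.ext hR)
    change ((h * R g * (R (h * R g))⁻¹ : G) : G ⧸ J) = h
    rw [hR, mul_inv_cancel_right]

end Transversal

/-- **Lemma 3.3.** Let `G` be a group with finite generating set `S`, let `H ≥ J` be
finite index normal subgroups of `G`, and let `R : G → G` be the representative map of
a Schreier transversal `T = range R` of (right cosets of) `H` in `G`: representatives
lie in the same coset, the map is constant on cosets, `R 1 = 1`, and every
representative is a product of a list of elements of `S ∪ S⁻¹` all of whose prefixes
are again representatives.  Let `Σ` be the associated Schreier generating set of `H`,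
consisting of the elements `t·s·(R(t·s))⁻¹` for `t ∈ T`, `s ∈ S` (counted with
multiplicity, one for each pair `(t, s)`).  Then
`w(X(G/J; S)) ≤ w(X(H/J; Σ)) + 2|S|[G : H]`, where `X(H/J; Σ)` is the Cayley graph of
the group `H/J` (realised as the image of `H` in `G/J`) with respect to the images of
the elements of `Σ`. -/
theorem stmt7 (G : Type*) [Group G] (S : Finset G)
    (hS : Subgroup.closure (S : Set G) = ⊤)
    (H J : Subgroup G) [hHn : H.Normal] [hJn : J.Normal]
    (hJH : J ≤ H) (hHfi : H.FiniteIndex) (hJfi : J.FiniteIndex)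
    (R : G → G)
    (hR1 : ∀ g : G, g * (R g)⁻¹ ∈ H)
    (hR2 : ∀ g g' : G, g' * g⁻¹ ∈ H → R g' = R g)
    (hR3 : R 1 = 1)
    (hSchreier : ∀ g : G, ∃ l : List G,
      (∀ x ∈ l, x ∈ S ∨ x⁻¹ ∈ S) ∧ R g = l.prod ∧
      ∀ n : ℕ, (l.take n).prod ∈ Set.range R) :
    (cayleyQuot G S J hJn).width ≤
      (MultiGraph.mk (↥(H.map (QuotientGroup.mk' J)))
        ((↥(H.map (QuotientGroup.mk' J))) × (↥(Set.range R) × {s // s ∈ S}))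
        (fun p => (p.1, p.1 *
          ⟨QuotientGroup.mk ((p.2.1 : G) * (p.2.2 : G) * (R ((p.2.1 : G) * (p.2.2 : G)))⁻¹),
           Subgroup.mem_map.mpr ⟨_, hR1 _, rfl⟩⟩))).width
      + 2 * S.card * H.index := by
  have hT := card_range_representative hR1 hR2
  have : Finite (Set.range R) := Nat.finite_of_card_ne_zero (hT ▸ hHfi.index_ne_zero)
  have : Finite (G ⧸ J) := Subgroup.finite_quotient_of_finiteIndex
  let φ := quotientEquivMapProdRange hJH hR1 hR2
  have hfib : ∀ (f : (G ⧸ J) × {s // s ∈ S} → G ⧸ J)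
      (_ : Function.Injective fun p => (f p, p.2)) (v : H.map (QuotientGroup.mk' J)),
      {p | (φ (f p)).1 = v}.ncard ≤ S.card * H.index := by
    intro f hf v
    have hcard : Nat.card (Set.range R × {s // s ∈ S}) = S.card * H.index := by
      rw [Nat.card_prod, hT, Nat.card_eq_fintype_card, Fintype.card_coe, mul_comm]
    rw [← hcard]
    refine Nat.card_le_card_of_injective (fun p => ((φ (f p.1)).2, p.1.2)) ?_
    rintro ⟨p, hp⟩ ⟨p', hp'⟩ h
    obtain ⟨h1, h2⟩ := Prod.mk.inj h
    have hφ : φ (f p) = φ (f p') := Prod.ext (hp.trans hp'.symm) h1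
    exact Subtype.ext (hf (Prod.ext (φ.injective hφ) h2))
  refine MultiGraph.width_le_width_add_of_fibration (cayleyQuot G S J hJn)
    (MultiGraph.mk _ _ _) φ (fun p => ((φ p.1).1, ((φ p.1).2, p.2))) ?_ ?_ _ fun v => ?_
  · intro p p' h
    simp only [Prod.mk.injEq] at h
    exact Prod.ext (φ.injective (Prod.ext h.1 h.2.1)) h.2.2
  · rintro ⟨q, s⟩
    induction q using QuotientGroup.induction_on with
    | H g =>
      refine Prod.ext rfl (Subtype.ext ?_)
      change ((g * (R g)⁻¹ : G) : G ⧸ J) * ((R g * s * (R (R g * s))⁻¹ : G) : G ⧸ J) =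
        ((g * s * (R (g * s))⁻¹ : G) : G ⧸ J)
      rw [representative_representative_mul hR1 hR2, ← QuotientGroup.mk_mul]
      congr 1
      group
  · refine (Set.ncard_union_le {p | (φ p.1).1 = v}
      {p : (G ⧸ J) × {s // s ∈ S} | (φ (p.1 * ((p.2 : G) : G ⧸ J))).1 = v}).trans ?_
    rw [mul_assoc, two_mul]
    refine add_le_add (hfib Prod.fst (fun _ _ h => h) v)
      (hfib (fun p => p.1 * ((p.2 : G) : G ⧸ J)) ?_ v)
    rintro ⟨q, s⟩ ⟨q', s'⟩ h
    obtain ⟨h1, rfl⟩ := Prod.mk.inj h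
    exact Prod.ext (mul_right_cancel h1) rfl
end

section
/- Let G be a group having a finite presentation with at least two more generators than relations (i.e. G = ⟨X | R⟩ with X, R finite and |X| − |R| ≥ 2). Then G has a finite index subgroup that admits a surjective homomorphism onto a non-abelian free group. -/
/-- Nontrivial powers of the first free generator and of its conjugate by a nontrivial power of the
second one do not commute. -/
theorem FreeGroup.not_commute_zpow_conj_zpow {a d : ℤ} (ha : a ≠ 0) (hd : d ≠ 0) :
    ¬ Commute ((FreeGroup.of (0 : Fin 2)) ^ d)
      (((FreeGroup.of (1 : Fin 2)) ^ a)⁻¹ * (FreeGroup.of (0 : Fin 2)) ^ d *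
        (FreeGroup.of (1 : Fin 2)) ^ a) := by
  intro h
  obtain ⟨f, hf₀, hf₁⟩ : ∃ f : FreeGroup (Fin 2) →* Matrix.SpecialLinearGroup (Fin 2) ℤ,
      f (FreeGroup.of 0) = ModularGroup.T ∧
        f (FreeGroup.of 1) = ModularGroup.S * ModularGroup.T * ModularGroup.S⁻¹ :=
    ⟨FreeGroup.lift ![ModularGroup.T, ModularGroup.S * ModularGroup.T * ModularGroup.S⁻¹],
      by simp, by simp⟩
  have h' := congrArg f h.eq
  simp only [_root_.map_mul, _root_.map_inv, map_zpow, hf₀, hf₁, conj_zpow] at h'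
  have h'' := congrFun (congrFun (congrArg Subtype.val h') 0) 0
  simp [ModularGroup.coe_T_zpow, ModularGroup.coe_S, Matrix.adjugate_fin_two] at h''
  have : d * a ^ 2 = 0 := by linarith [h''.resolve_left hd]
  simp [ha, hd] at this

/-- A free group on a type with at most one element is commutative. -/
theorem FreeGroup.commute_of_subsingleton {ι : Type*} [Subsingleton ι] (x y : FreeGroup ι) :
    Commute x y := by
  have key : ∀ (i : ι) (z : FreeGroup ι), Commute (FreeGroup.of i) z := by
    intro i z
    induction z using FreeGroup.induction_on with
    | C1 => exact Commute.one_right _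
    | of j => rw [Subsingleton.elim j i]
    | inv_of j h => exact h.inv_right
    | mul _ _ h₁ h₂ => exact h₁.mul_right h₂
  induction x using FreeGroup.induction_on with
  | C1 => exact Commute.one_left _
  | of i => exact key i y
  | inv_of i h => exact h.inv_left
  | mul _ _ h₁ h₂ => exact h₁.mul_left h₂

/-- A group with a homomorphism to a free group whose image is not commutative maps onto the free
group of rank two. -/
theorem exists_surjective_freeGroup_of_not_commute {H : Type*} [Group H] {κ : Type}
    (ρ : H →* FreeGroup κ) {x y : H} (hxy : ¬ Commute (ρ x) (ρ y)) :
    ∃ f : H →* FreeGroup (Fin 2), Function.Surjective f := by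
  let e := IsFreeGroup.toFreeGroup ρ.range
  have hnt : Nontrivial (IsFreeGroup.Generators ρ.range) := by
    by_contra hn
    rw [not_nontrivial_iff_subsingleton] at hn
    have h := FreeGroup.commute_of_subsingleton (e (ρ.rangeRestrict x)) (e (ρ.rangeRestrict y))
    have h' := (h.map e.symm).map ρ.range.subtype
    simp only [MulEquiv.symm_apply_apply] at h'
    exact hxy h'
  obtain ⟨i, j, hij⟩ := hnt
  classical
  have hg : Function.Surjective (fun k => if k = i then (0 : Fin 2) else 1) := by
    intro b
    fin_cases b
    · exact ⟨i, by simp⟩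
    · exact ⟨j, by simp [hij.symm]⟩
  refine ⟨((FreeGroup.map fun k => if k = i then (0 : Fin 2) else 1).comp e.toMonoidHom).comp
    ρ.rangeRestrict, ?_⟩
  exact ((FreeGroup.map_surjective hg).comp e.surjective).comp ρ.rangeRestrict_surjective

/-- A cocycle over a `ℤ`-valued homomorphism `Θ` which is periodic up to conjugation by `s`
restricts to a homomorphism on the elements whose degree is divisible by the period. -/
theorem exists_monoidHom_ker_of_cocycle {Γ F : Type*} [Group Γ] [Group F] (n : ℕ) [NeZero n]
    (Θ : Γ →* Multiplicative ℤ) (c : Γ → ℤ → F) (s : F)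
    (hmul : ∀ g h i, c (g * h) i = c g (i + (Θ h).toAdd) * c h i)
    (hper : ∀ g i (k : ℤ), c g (i + k * n) = s ^ k * c g i * (s ^ k)⁻¹) (j : ℤ) :
    ∃ H : Subgroup Γ, H.FiniteIndex ∧ (∀ g, g ∈ H ↔ (n : ℤ) ∣ (Θ g).toAdd) ∧
      ∃ ρ : H →* F, ∀ g (k : ℤ), (Θ g.1).toAdd = k * n → ρ g = (s ^ k)⁻¹ * c g.1 j := by
  let φ : Γ →* Multiplicative (ZMod n) := (Int.castAddHom (ZMod n)).toMultiplicative.comp Θ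
  have hmem : ∀ g, g ∈ φ.ker ↔ (n : ℤ) ∣ (Θ g).toAdd := by
    intro g
    rw [← ZMod.intCast_zmod_eq_zero_iff_dvd]
    rfl
  have hn : (n : ℤ) ≠ 0 := by exact_mod_cast NeZero.ne n
  refine ⟨φ.ker, inferInstance, hmem,
    MonoidHom.mk' (fun g => (s ^ ((Θ g.1).toAdd / n))⁻¹ * c g.1 j) ?_, ?_⟩
  · intro g h
    obtain ⟨k, hk⟩ := (hmem _).1 g.2
    obtain ⟨l, hl⟩ := (hmem _).1 h.2
    have hgh : (Θ (g * h : φ.ker).1).toAdd = n * (l + k) := by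
      rw [Subgroup.coe_mul, map_mul, toAdd_mul, hk, hl]; ring
    simp only [hgh, hk, hl, Int.mul_ediv_cancel_left _ hn]
    rw [Subgroup.coe_mul, hmul, hl, mul_comm (n : ℤ) l, hper, zpow_add]
    group
  · intro g k hk
    simp [hk, Int.mul_ediv_cancel _ hn]

section Words

variable {α F : Type*} [Group F]

/-- The exponent sum of a word, where the generator `x` has weight `θ x`, as a linear function
of the weights. -/
def wordDegree : List (α × Bool) → (α → ℤ) →ₗ[ℤ] ℤ
  | [] => 0
  | (x, true) :: w => wordDegree w + LinearMap.proj x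
  | (x, false) :: w => wordDegree w - LinearMap.proj x

/-- The product of labels along the path spelled by a word, read from right to left and starting
at `j`, in the graph with an edge from `i` to `i + θ x` labelled `c x i` for all `x` and `i`. -/
def pathLabel (θ : α → ℤ) (c : α → ℤ → F) : List (α × Bool) → ℤ → F
  | [], _ => 1
  | (x, true) :: w, j => c x (j + wordDegree w θ) * pathLabel θ c w j
  | (x, false) :: w, j => (c x (j + wordDegree w θ - θ x))⁻¹ * pathLabel θ c w j

/-- The analogue of `pathLabel` for integer labels on the graph with vertex set `ZMod n`, as a
linear function of the labels. -/
def pathSum (n : ℕ) (θ : α → ℤ) : List (α × Bool) → ZMod n → (α × ZMod n → ℤ) →ₗ[ℤ] ℤ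
  | [], _ => 0
  | (x, true) :: w, j => LinearMap.proj (x, j + (wordDegree w θ : ℤ)) + pathSum n θ w j
  | (x, false) :: w, j => pathSum n θ w j - LinearMap.proj (x, j + (wordDegree w θ - θ x : ℤ))

/-- The permutation of `ℤ × F` moving along the edges of the generator `x`. -/
def edgePerm (θ : α → ℤ) (c : α → ℤ → F) (x : α) : Equiv.Perm (ℤ × F) where
  toFun p := (p.1 + θ x, c x p.1 * p.2)
  invFun p := (p.1 - θ x, (c x (p.1 - θ x))⁻¹ * p.2)
  left_inv p := by simp
  right_inv p := by simp

theorem lift_edgePerm_mk (θ : α → ℤ) (c : α → ℤ → F) (w : List (α × Bool)) (j : ℤ) (y : F) :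
    FreeGroup.lift (edgePerm θ c) (FreeGroup.mk w) (j, y) =
      (j + wordDegree w θ, pathLabel θ c w j * y) := by
  rw [FreeGroup.lift_mk]
  induction w with
  | nil => simp [wordDegree, pathLabel]
  | cons p w ih =>
    obtain ⟨x, b⟩ := p
    rw [List.map_cons, List.prod_cons, Equiv.Perm.mul_apply, ih]
    cases b
    · change (_, _) = _
      ext1
      · simp [wordDegree, add_sub_assoc]
      · simp [pathLabel, mul_assoc]
    · change (_, _) = _
      ext1
      · simp [wordDegree, add_assoc]
      · simp [pathLabel, mul_assoc]

theorem lift_ofAdd_mk (θ : α → ℤ) (w : List (α × Bool)) :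
    (FreeGroup.lift (fun x => Multiplicative.ofAdd (θ x)) (FreeGroup.mk w)).toAdd =
      wordDegree w θ := by
  rw [FreeGroup.lift_mk]
  induction w with
  | nil => simp [wordDegree]
  | cons p w ih =>
    obtain ⟨x, b⟩ := p
    rw [List.map_cons, List.prod_cons, toAdd_mul, ih]
    cases b <;> simp [wordDegree] <;> ring

theorem pathLabel_add_mul (θ : α → ℤ) (c : α → ℤ → F) (n : ℕ) (s : F)
    (hc : ∀ x i (k : ℤ), c x (i + k * n) = s ^ k * c x i * (s ^ k)⁻¹)
    (w : List (α × Bool)) (i k : ℤ) :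
    pathLabel θ c w (i + k * n) = s ^ k * pathLabel θ c w i * (s ^ k)⁻¹ := by
  induction w with
  | nil => simp [pathLabel]
  | cons p w ih =>
    obtain ⟨x, b⟩ := p
    cases b
    · rw [pathLabel, pathLabel, ih,
        show i + k * n + wordDegree w θ - θ x = i + wordDegree w θ - θ x + k * n by ring, hc]
      group
    · rw [pathLabel, pathLabel, ih,
        show i + k * n + wordDegree w θ = i + wordDegree w θ + k * n by ring, hc]
      group

theorem abs_wordDegree_le {θ : α → ℤ} {B : ℕ} (hB : ∀ x, |θ x| ≤ B) (w : List (α × Bool)) :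
    |wordDegree w θ| ≤ w.length * B := by
  induction w with
  | nil => simp [wordDegree]
  | cons p w ih =>
    obtain ⟨x, b⟩ := p
    have hx := hB x
    rw [abs_le] at *
    cases b <;> simp [wordDegree, add_mul] <;> constructor <;> linarith

/-- If all labels near `j` are powers of a single element `v`, then so is the label of a path
starting at `j`, and the exponents add up. -/
theorem pathLabel_eq_zpow {n : ℕ} {θ : α → ℤ} {c : α → ℤ → F} {B : ℕ} (hB : ∀ x, |θ x| ≤ B)
    {f : α × ZMod n → ℤ} {v : F} {j : ℤ} (w : List (α × Bool))
    (hc : ∀ x i, |i - j| ≤ w.length * B → c x i = v ^ f (x, (i : ZMod n))) :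
    pathLabel θ c w j = v ^ pathSum n θ w j f := by
  induction w with
  | nil => simp [pathLabel, pathSum]
  | cons p w ih =>
    obtain ⟨x, b⟩ := p
    have hlen : ((((x, b) :: w).length : ℕ) : ℤ) * B = w.length * B + B := by
      simp [add_mul]
    have ih' := ih fun y i hi => hc y i (by rw [hlen]; linarith [Int.natCast_nonneg B])
    have hdeg := abs_wordDegree_le hB ((x, b) :: w)
    have hdeg' := abs_wordDegree_le hB w
    cases b
    · rw [pathLabel, ih', hc]
      · simp only [pathSum, LinearMap.sub_apply, LinearMap.proj_apply]
        rw [sub_eq_neg_add (pathSum n θ w j f), zpow_add, zpow_neg]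
        push_cast
        simp only [add_sub_assoc]
      · simpa [wordDegree, add_sub_assoc] using hdeg
    · rw [pathLabel, ih', hc]
      · simp only [pathSum, LinearMap.add_apply, LinearMap.proj_apply]
        rw [zpow_add]
        push_cast
        rfl
      · rw [add_sub_cancel_left, hlen]
        linarith [Int.natCast_nonneg B]

end Words

/-- A homogeneous integral linear system with more unknowns than equations has a nonzero
solution. -/
theorem exists_ne_zero_map_eq_zero_of_card_lt {ι κ : Type*} [Fintype ι] [Fintype κ]
    (E : (ι → ℤ) →ₗ[ℤ] (κ → ℤ)) (h : Fintype.card κ < Fintype.card ι) :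
    ∃ f, f ≠ 0 ∧ E f = 0 := by
  by_contra! hcon
  refine h.not_ge (card_le_of_injective ℤ E ?_)
  rw [injective_iff_map_eq_zero]
  intro f hf
  by_contra h0
  exact hcon f h0 hf

/-- Edge labels on the cyclic graph with vertex set `ZMod n` whose sum along every relator
vanishes, and which vanish near `0` and on the edges of `t`. -/
theorem exists_cyclic_labels {α : Type*} [Fintype α] (W : Finset (List (α × Bool)))
    (hcard : W.card + 2 ≤ Fintype.card α) (θ : α → ℤ) (t : α) (M : ℕ) :
    ∃ n : ℕ, n ≠ 0 ∧ ∃ f : α × ZMod n → ℤ, f ≠ 0 ∧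
      (∀ w ∈ W, ∀ j, pathSum n θ w j f = 0) ∧ (∀ j, f (t, j) = 0) ∧
      ∀ x, ∀ k : ℕ, k < 2 * M → f (x, (k : ZMod n) - M) = 0 := by
  let n := 2 * M * Fintype.card α + 1
  let E : (α × ZMod n → ℤ) →ₗ[ℤ] ((W × ZMod n) ⊕ ZMod n ⊕ (α × Fin (2 * M)) → ℤ) :=
    LinearMap.pi (Sum.elim (fun p => pathSum n θ p.1.1 p.2)
      (Sum.elim (fun j => LinearMap.proj (t, j))
        (fun p => LinearMap.proj (p.1, ((p.2 : ℕ) : ZMod n) - M))))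
  obtain ⟨f, hf, hE⟩ := exists_ne_zero_map_eq_zero_of_card_lt E (by
    simp only [Fintype.card_sum, Fintype.card_prod, ZMod.card, Fintype.card_fin, Fintype.card_coe]
    have h := Nat.mul_le_mul_right n hcard
    have h2 : n = Fintype.card α * (2 * M) + 1 := by simp only [n]; ring
    rw [add_mul] at h
    omega)
  refine ⟨n, Nat.succ_ne_zero _, f, hf, fun w hw j => ?_, fun j => ?_, fun x k hk => ?_⟩
  · exact congrFun hE (Sum.inl (⟨w, hw⟩, j))
  · exact congrFun hE (Sum.inr (Sum.inl j))
  · exact congrFun hE (Sum.inr (Sum.inr (x, ⟨k, hk⟩)))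

/-- If a multiple of `n` separates `i` from an integer `j` at distance at most `M`, then `i` is
close to `0` modulo `n`. -/
theorem exists_intCast_eq_of_ediv_ne {n M : ℕ} (hn : n ≠ 0) {i j : ℤ} (hij : |i - j| ≤ M)
    (hdiv : i / n ≠ j / n) : ∃ k : ℕ, k < 2 * M ∧ (i : ZMod n) = (k : ZMod n) - M := by
  have hn' : (0 : ℤ) < n := by exact_mod_cast Nat.pos_of_ne_zero hn
  obtain ⟨q, hq₁, hq₂⟩ : ∃ q : ℤ, -M ≤ i - n * q ∧ i - n * q < M := by
    rw [abs_le] at hij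
    have hi := Int.mul_ediv_add_emod i n
    have hj := Int.mul_ediv_add_emod j n
    have hi₀ := Int.emod_nonneg i hn'.ne'
    have hj₀ := Int.emod_nonneg j hn'.ne'
    have hi₁ := Int.emod_lt_of_pos i hn'
    have hj₁ := Int.emod_lt_of_pos j hn'
    rcases lt_or_gt_of_ne hdiv with h | h
    · have := mul_le_mul_of_nonneg_left (Int.add_one_le_iff.2 h) hn'.le
      exact ⟨i / n + 1, by linarith, by linarith⟩
    · have := mul_le_mul_of_nonneg_left (Int.add_one_le_iff.2 h) hn'.le
      exact ⟨i / n, by linarith, by linarith⟩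
  refine ⟨(i - n * q + M).toNat, by omega, ?_⟩
  have h : (((i - n * q + M).toNat : ℤ) : ZMod n) = ((i - n * q + M : ℤ) : ZMod n) := by
    rw [Int.toNat_of_nonneg (by linarith)]
  rw [Int.cast_natCast] at h
  rw [h]
  simp

/-- **Corollary 1.3 (Baumslag–Pride).** Let `G` be a group having a finite presentation
with at least two more generators than relations (here `π` is the quotient map from the
free group on the finite type `α` of generators, whose kernel is the normal closure of
the finite set `Rel` of relations, with `|α| ≥ |Rel| + 2`).  Then `G` has a finite index
subgroup that admits a surjective homomorphism onto a non-abelian free group. -/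
theorem stmt11 (G : Type*) [Group G]
    (α : Type) [Fintype α]
    (π : FreeGroup α →* G) (hsurj : Function.Surjective π)
    (Rel : Finset (FreeGroup α))
    (hker : π.ker = Subgroup.normalClosure (Rel : Set (FreeGroup α)))
    (hcard : Rel.card + 2 ≤ Fintype.card α) :
    ∃ H : Subgroup G, H.FiniteIndex ∧
      ∃ f : ↥H →* FreeGroup (Fin 2), Function.Surjective f := by
  classical
  let W : Finset (List (α × Bool)) := Rel.image FreeGroup.toWord
  have hW : W.card + 2 ≤ Fintype.card α := by
    have : W.card ≤ Rel.card := Finset.card_image_le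
    omega
  -- a nonzero homomorphism to `ℤ`
  obtain ⟨θ, hθ, hθW⟩ := exists_ne_zero_map_eq_zero_of_card_lt
    (LinearMap.pi fun w : W => wordDegree w.1) (by rw [Fintype.card_coe]; omega)
  obtain ⟨t, ht⟩ := Function.ne_iff.1 hθ
  have hdeg : ∀ w ∈ W, wordDegree w θ = 0 := fun w hw => congrFun hθW ⟨w, hw⟩
  obtain ⟨B, hB⟩ : ∃ B : ℕ, ∀ x, |θ x| ≤ B :=
    ⟨Finset.univ.sup fun x => (θ x).natAbs, fun x => by
      rw [Int.abs_eq_natAbs]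
      exact_mod_cast Finset.le_sup (f := fun x => (θ x).natAbs) (Finset.mem_univ x)⟩
  let M := W.sup List.length * B
  obtain ⟨n, hn, f, hf, hfW, hft, hfM⟩ := exists_cyclic_labels W hW θ t M
  have : NeZero n := ⟨hn⟩
  have hn' : (n : ℤ) ≠ 0 := by exact_mod_cast hn
  -- the labelling of the infinite cyclic cover
  let s : FreeGroup (Fin 2) := FreeGroup.of 0
  let u : FreeGroup (Fin 2) := FreeGroup.of 1
  let c : α → ℤ → FreeGroup (Fin 2) := fun x i =>
    s ^ (i / n) * u ^ f (x, (i : ZMod n)) * (s ^ (i / n))⁻¹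
  have hc : ∀ x i (k : ℤ), c x (i + k * n) = s ^ k * c x i * (s ^ k)⁻¹ := by
    intro x i k
    simp only [c, Int.add_mul_ediv_right _ _ hn', Int.cast_add, Int.cast_mul, Int.cast_natCast,
      ZMod.natCast_self, mul_zero, add_zero, add_comm (i / (n : ℤ)) k, zpow_add]
    group
  have hlabel : ∀ w ∈ W, ∀ j, pathLabel θ c w j = 1 := by
    intro w hw j
    rw [pathLabel_eq_zpow (n := n) (f := f) (v := s ^ (j / n) * u * (s ^ (j / n))⁻¹) hB w,
      hfW w hw, zpow_zero]
    intro x i hi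
    have hiM : |i - j| ≤ M := hi.trans (by
      exact_mod_cast Nat.mul_le_mul_right B (Finset.le_sup (f := List.length) hw))
    rw [conj_zpow]
    by_cases hdiv : i / n = j / n
    · simp only [c, hdiv]
    · obtain ⟨k, hk, hik⟩ := exists_intCast_eq_of_ediv_ne hn hiM hdiv
      simp [c, hik, hfM x k hk]
  -- both the degree and the action on labels factor through `G`
  have hΘker : π.ker ≤ (FreeGroup.lift fun x => Multiplicative.ofAdd (θ x)).ker := by
    rw [hker]
    refine Subgroup.normalClosure_le_normal fun r hr => ?_
    have hrW : r.toWord ∈ W := Finset.mem_image_of_mem _ hr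
    have := (lift_ofAdd_mk θ r.toWord).trans (hdeg _ hrW)
    rw [FreeGroup.mk_toWord] at this
    exact this
  have hPker : π.ker ≤ (FreeGroup.lift (edgePerm θ c)).ker := by
    rw [hker]
    refine Subgroup.normalClosure_le_normal fun r hr => ?_
    have hrW : r.toWord ∈ W := Finset.mem_image_of_mem _ hr
    refine Equiv.ext fun ⟨j, y⟩ => ?_
    have := lift_edgePerm_mk θ c r.toWord j y
    rw [FreeGroup.mk_toWord, hdeg _ hrW, hlabel _ hrW] at this
    simpa using this
  let Θ : G →* Multiplicative ℤ := π.liftOfSurjective hsurj ⟨_, hΘker⟩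
  let P : G →* Equiv.Perm (ℤ × FreeGroup (Fin 2)) := π.liftOfSurjective hsurj ⟨_, hPker⟩
  have hΘ : ∀ g, Θ (π g) = FreeGroup.lift (fun x => Multiplicative.ofAdd (θ x)) g :=
    MonoidHom.liftOfRightInverse_comp_apply _ _ _ ⟨_, hΘker⟩
  have hP : ∀ g, P (π g) = FreeGroup.lift (edgePerm θ c) g :=
    MonoidHom.liftOfRightInverse_comp_apply _ _ _ ⟨_, hPker⟩
  have hPmk : ∀ w j y, P (π (FreeGroup.mk w)) (j, y) =
      (j + (Θ (π (FreeGroup.mk w))).toAdd, pathLabel θ c w j * y) := by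
    intro w j y
    rw [hP, hΘ, lift_ofAdd_mk, lift_edgePerm_mk]
  have hmk : ∀ g : G, ∃ w, g = π (FreeGroup.mk w) := by
    intro g
    obtain ⟨r, rfl⟩ := hsurj g
    exact ⟨r.toWord, by rw [FreeGroup.mk_toWord]⟩
  let C : G → ℤ → FreeGroup (Fin 2) := fun g i => (P g (i, 1)).2
  have hPC : ∀ g i y, P g (i, y) = (i + (Θ g).toAdd, C g i * y) := by
    intro g i y
    obtain ⟨w, rfl⟩ := hmk g
    simp [C, hPmk]
  have hCmul : ∀ g h i, C (g * h) i = C g (i + (Θ h).toAdd) * C h i := by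
    intro g h i
    have : C (g * h) i = (P g (P h (i, 1))).2 := by simp [C]
    rw [this, hPC h, hPC g, mul_one]
  have hCper : ∀ g i (k : ℤ), C g (i + k * n) = s ^ k * C g i * (s ^ k)⁻¹ := by
    intro g i k
    obtain ⟨w, rfl⟩ := hmk g
    simp only [C, hPmk, mul_one]
    exact pathLabel_add_mul θ c n s hc w i k
  have hCof : ∀ x i, C (π (FreeGroup.of x)) i = c x i := by
    intro x i
    simp [C, hP, edgePerm]
  have hΘof : ∀ x, (Θ (π (FreeGroup.of x))).toAdd = θ x := by
    intro x
    simp [hΘ]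
  -- two elements of the finite index subgroup with noncommuting images
  obtain ⟨⟨x, z⟩, hxz⟩ := Function.ne_iff.1 hf
  let j : ℤ := z.val
  have hjz : ((j : ℤ) : ZMod n) = z := by simp [j]
  have hj : j / n = 0 := Int.ediv_eq_zero_of_lt (by positivity) (Int.ofNat_lt.2 z.val_lt)
  have hcx : c x j = u ^ f (x, z) := by simp [c, hj, hjz]
  obtain ⟨H, hH, hmem, ρ, hρ⟩ := exists_monoidHom_ker_of_cocycle n Θ C s hCmul hCper j
  refine ⟨H, hH, ?_⟩
  let T : G := π (FreeGroup.of t) ^ n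
  let X : G := π (FreeGroup.of x)
  have hΘT : (Θ T).toAdd = θ t * n := by
    simp only [T, map_pow, toAdd_pow, hΘof, nsmul_eq_mul]; ring
  have hΘX : (Θ (X⁻¹ * T * X)).toAdd = θ t * n := by
    rw [← hΘT]; simp
  have hC1 : ∀ i, C 1 i = 1 := fun i => by simp [C]
  have hCT : ∀ i, C T i = 1 := by
    have hpow : ∀ (m : ℕ) i, C (π (FreeGroup.of t) ^ m) i = 1 := by
      intro m
      induction m with
      | zero => intro i; rw [pow_zero, hC1]
      | succ m ih => intro i; rw [pow_succ, hCmul, ih, hCof]; simp [c, hft]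
    exact hpow n
  have hCX : C (X⁻¹ * T * X) j =
      s ^ θ t * (u ^ f (x, z))⁻¹ * (s ^ θ t)⁻¹ * u ^ f (x, z) := by
    have hinv : C X⁻¹ (j + (Θ X).toAdd) = (C X j)⁻¹ := by
      rw [eq_inv_iff_mul_eq_one, ← hCmul, inv_mul_cancel, hC1]
    rw [hCmul, hCmul, hCT, mul_one, hΘT, hCper, hinv]
    simp only [X, hCof, hcx]
  have hTH : T ∈ H := (hmem T).2 ⟨θ t, by rw [hΘT, mul_comm]⟩
  have hXH : X⁻¹ * T * X ∈ H := (hmem _).2 ⟨θ t, by rw [hΘX, mul_comm]⟩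
  refine exists_surjective_freeGroup_of_not_commute ρ (x := ⟨T, hTH⟩) (y := ⟨_, hXH⟩) ?_
  rw [hρ ⟨T, hTH⟩ (θ t) hΘT, hρ ⟨_, hXH⟩ (θ t) hΘX, hCT, hCX, mul_one]
  have key := FreeGroup.not_commute_zpow_conj_zpow (a := f (x, z)) (d := -θ t) hxz
    (neg_ne_zero.2 ht)
  rw [zpow_neg] at key
  convert key using 1
  simp only [s, u]
  group
end

section
/- Let G be a group having a finite presentation with one more generator than relations (i.e. G = ⟨X | R⟩ with X, R finite and |X| − |R| = 1), and suppose that one of the relations in R is a proper power, i.e. equals w^q in the free group on X for some word w and some integer q ≥ 2. Then G has a finite index subgroup that admits a surjective homomorphism onto a non-abelian free group. -/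
/-- The value at `x` of the homomorphism from a free group to `ℤ` with prescribed values `e` on the
generators. -/
def FreeGroup.height {ι : Type*} (e : ι → ℤ) (x : FreeGroup ι) : ℤ :=
  (FreeGroup.lift (fun i => Multiplicative.ofAdd (e i)) x).toAdd

/-- The action of `ℤ` on functions `ℤ → A` by translation. -/
def shiftAut (A : Type*) [Group A] : Multiplicative ℤ →* MulAut (ℤ → A) where
  toFun g :=
    { toFun := fun f j => f (j + g.toAdd)
      invFun := fun f j => f (j - g.toAdd)
      left_inv := fun f => by ext j; simp
      right_inv := fun f => by ext j; simp
      map_mul' := fun _ _ => rfl }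
  map_one' := by ext f j; simp
  map_mul' g h := by ext f j; simp [add_assoc]

/-- The homomorphism to `(ℤ → A) ⋊ ℤ` sending the `i`-th generator to `(a i, e i)`. -/
def FreeGroup.toShift {ι A : Type*} [Group A] (e : ι → ℤ) (a : ι → ℤ → A) :
    FreeGroup ι →* (ℤ → A) ⋊[shiftAut A] Multiplicative ℤ :=
  FreeGroup.lift fun i => ⟨a i, Multiplicative.ofAdd (e i)⟩

/-- The product of the labels along the path that spells `x` and starts at `j`, where the `i`-th
generator moves by `e i` and its step from `h` to `h + e i` is labelled `a i h`. -/
def FreeGroup.holonomy {ι A : Type*} [Group A] (e : ι → ℤ) (a : ι → ℤ → A) (x : FreeGroup ι)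
    (j : ℤ) : A :=
  (FreeGroup.toShift e a x).left j

namespace FreeGroup

section height

variable {ι : Type*} (e e' : ι → ℤ) (x y : FreeGroup ι)

@[simp] theorem height_of (i : ι) : height e (of i) = e i := by simp [height]

@[simp] theorem height_one : height e 1 = 0 := by simp [height]

@[simp] theorem height_mul : height e (x * y) = height e x + height e y := by simp [height]

@[simp] theorem height_inv : height e x⁻¹ = -height e x := by simp [height]

@[simp] theorem height_pow (n : ℕ) : height e (x ^ n) = n * height e x := by simp [height]

@[simp] theorem height_zpow (n : ℤ) : height e (x ^ n) = n * height e x := by simp [height]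

theorem height_add : height (e + e') x = height e x + height e' x := by
  induction x using FreeGroup.induction_on with
  | C1 => simp
  | of i => simp
  | inv_of i _ => simp [add_comm]
  | mul x y hx hy => simp only [height_mul, hx, hy]; ring

theorem height_mul_left (d : ℤ) : height (fun i => d * e i) x = d * height e x := by
  induction x using FreeGroup.induction_on with
  | C1 => simp
  | of i => simp
  | inv_of i _ => simp
  | mul x y hx hy => simp only [height_mul, hx, hy]; ring

theorem toShift_right {A : Type*} [Group A] (a : ι → ℤ → A) :
    (toShift e a x).right = Multiplicative.ofAdd (height e x) := by
  change (SemidirectProduct.rightHom.comp (toShift e a)) x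
    = FreeGroup.lift (fun i => Multiplicative.ofAdd (e i)) x
  congr 1
  ext i
  simp [toShift]

/-- Fewer conditions than generators leave room for a surjection of the free group onto `ℤ` that
satisfies all of them. -/
theorem exists_height_eq_one [Fintype ι] {κ : Type*} [Fintype κ] (R : κ → FreeGroup ι)
    (h : Fintype.card κ < Fintype.card ι) :
    ∃ e : ι → ℤ, (∀ k, height e (R k) = 0) ∧ ∃ u, height e u = 1 := by
  let L : (ι → ℤ) →+ (κ → ℤ) :=
    AddMonoidHom.mk' (fun e k => height e (R k)) fun e e' => funext fun k => height_add e e' (R k)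
  have hL : ¬ Function.Injective L.toIntLinearMap :=
    fun hinj => (card_le_of_injective ℤ L.toIntLinearMap hinj).not_gt h
  obtain ⟨c, hc, hc0⟩ : ∃ c, L c = 0 ∧ c ≠ 0 := by
    by_contra! H
    exact hL ((injective_iff_map_eq_zero L).2 H)
  let χ : Additive (FreeGroup ι) →+ ℤ :=
    AddMonoidHom.mk' (fun x => height c x.toMul) fun x y => height_mul c x.toMul y.toMul
  obtain ⟨d, hd⟩ := Int.subgroup_cyclic χ.range
  have hdvd (i : ι) : d ∣ c i := by
    have : χ (Additive.ofMul (of i)) ∈ χ.range := ⟨_, rfl⟩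
    rw [hd, ← AddSubgroup.zmultiples_eq_closure, Int.mem_zmultiples_iff] at this
    simpa [χ] using this
  choose e he using hdvd
  obtain rfl : c = fun i => d * e i := funext he
  have hd0 : d ≠ 0 := by
    rintro rfl
    exact hc0 (by ext; simp)
  refine ⟨e, fun k => ?_, ?_⟩
  · have : height (fun i => d * e i) (R k) = 0 := congrFun hc k
    rw [height_mul_left] at this
    exact (mul_eq_zero.1 this).resolve_left hd0
  · have : d ∈ χ.range := by
      rw [hd]
      exact AddSubgroup.subset_closure rfl
    obtain ⟨u, hu⟩ := this
    refine ⟨u.toMul, mul_left_cancel₀ hd0 ?_⟩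
    rw [← height_mul_left, mul_one]
    exact hu

end height

section holonomy

variable {ι A : Type*} [Group A] (e : ι → ℤ) (a : ι → ℤ → A) (x y : FreeGroup ι) (j : ℤ)

@[simp] theorem holonomy_of (i : ι) : holonomy e a (of i) j = a i j := by
  simp [holonomy, toShift]

@[simp] theorem holonomy_one : holonomy e a 1 j = 1 := by simp [holonomy]

theorem holonomy_mul :
    holonomy e a (x * y) j = holonomy e a x j * holonomy e a y (j + height e x) := by
  rw [holonomy, _root_.map_mul, SemidirectProduct.mul_left, toShift_right]
  rfl

theorem holonomy_inv : holonomy e a x⁻¹ j = (holonomy e a x (j - height e x))⁻¹ := by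
  rw [eq_inv_iff_mul_eq_one, ← holonomy_one e a j, ← inv_mul_cancel x, holonomy_mul, height_inv,
    sub_eq_add_neg]

theorem holonomy_pow_of_height_eq_zero (h : height e x = 0) (n : ℕ) :
    holonomy e a (x ^ n) j = holonomy e a x j ^ n := by
  induction n with
  | zero => simp
  | succ n ih => simp [pow_succ, holonomy_mul, ih, h]

theorem holonomy_pow_eq_one (h : ∀ j, holonomy e a x j = 1) (n : ℕ) :
    holonomy e a (x ^ n) j = 1 := by
  induction n with
  | zero => simp
  | succ n ih => simp [pow_succ, holonomy_mul, ih, h]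

theorem holonomy_zpow_eq_one (h : ∀ j, holonomy e a x j = 1) (n : ℤ) :
    holonomy e a (x ^ n) j = 1 := by
  obtain ⟨n, rfl | rfl⟩ := n.eq_nat_or_neg
  · simpa using holonomy_pow_eq_one e a x j h n
  · simp [holonomy_inv, holonomy_pow_eq_one e a x _ h n]

theorem holonomy_comp {B : Type*} [Group B] (θ : A →* B) :
    holonomy e (fun i h => θ (a i h)) x j = θ (holonomy e a x j) := by
  induction x using FreeGroup.induction_on generalizing j with
  | C1 => simp
  | of i => simp
  | inv_of i ih => simp [holonomy_inv]
  | mul x y hx hy => simp [holonomy_mul, hx, hy]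

theorem holonomy_shift (n : ℤ) :
    holonomy e (fun i h => a i (h + n)) x j = holonomy e a x (j + n) := by
  induction x using FreeGroup.induction_on generalizing j with
  | C1 => simp
  | of i => simp
  | inv_of i ih => simp [holonomy_inv, sub_add_eq_add_sub]
  | mul x y hx hy => simp [holonomy_mul, hx, hy, add_right_comm]

theorem holonomy_div {A : Type*} [CommGroup A] (a b : ι → ℤ → A) :
    holonomy e (a / b) x j = holonomy e a x j / holonomy e b x j := by
  induction x using FreeGroup.induction_on generalizing j with
  | C1 => simp
  | of i => simp
  | inv_of i ih => simp [holonomy_inv, div_eq_mul_inv, mul_comm]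
  | mul x y hx hy => simp only [holonomy_mul, hx, hy, mul_div_mul_comm]

/-- The holonomy of a word only depends on the labels near the starting point. -/
theorem exists_radius (A : Type*) [Group A] :
    ∃ N : ℕ, ∀ (a b : ι → ℤ → A) (j : ℤ),
      (∀ i h, j - N ≤ h → h ≤ j + N → a i h = b i h) → holonomy e a x j = holonomy e b x j := by
  induction x using FreeGroup.induction_on with
  | C1 => exact ⟨0, by simp⟩
  | of i => exact ⟨0, fun a b j h => by simpa using h i j (by simp) (by simp)⟩
  | inv_of i _ =>
    refine ⟨(e i).natAbs, fun a b j h => ?_⟩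
    simpa [holonomy_inv] using h i (j - e i) (by omega) (by omega)
  | mul x y hx hy =>
    obtain ⟨N, hN⟩ := hx
    obtain ⟨M, hM⟩ := hy
    refine ⟨N + M + (height e x).natAbs, fun a b j h => ?_⟩
    rw [holonomy_mul, holonomy_mul, hN a b j fun i k h₁ h₂ => h i k (by omega) (by omega),
      hM a b _ fun i k h₁ h₂ => h i k (by omega) (by omega)]

theorem exists_radius_finset (S : Finset (FreeGroup ι)) (A : Type*) [Group A] :
    ∃ N : ℕ, ∀ x ∈ S, ∀ (a b : ι → ℤ → A) (j : ℤ),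
      (∀ i h, j - N ≤ h → h ≤ j + N → a i h = b i h) → holonomy e a x j = holonomy e b x j := by
  choose N hN using fun x => exists_radius e x A
  refine ⟨S.sup N, fun x hx a b j h => hN x a b j fun i k h₁ h₂ => h i k ?_ ?_⟩ <;>
  · have := Finset.le_sup (f := N) hx
    omega

/-- For a long enough period there is a nontrivial periodic labelling in `ℤ/p` that vanishes near
the multiples of the period and has trivial holonomy along fewer words than there are
generators. -/
theorem exists_periodic_labelling [Fintype ι] {κ : Type*} [Fintype κ] (R : κ → FreeGroup ι)
    (hκ : Fintype.card κ < Fintype.card ι) (p : ℕ) [Fact p.Prime] (N : ℕ) :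
    ∃ n : ℕ, 0 < n ∧ ∃ b : ι → ℤ → Multiplicative (ZMod p),
      (∀ i j m, b i (j + m * n) = b i j) ∧
      (∀ i (m l : ℤ), -N ≤ l → l ≤ N → b i (m * n + l) = 1) ∧
      (∀ k j, holonomy e b (R k) j = 1) ∧
      ∃ i, ∃ j : ℤ, 0 ≤ j ∧ j < n ∧ b i j ≠ 1 := by
  classical
  let n := Fintype.card ι * (2 * N + 1) + 1
  have hn : 0 < n := Nat.succ_pos _
  have : NeZero n := ⟨hn.ne'⟩
  let M := Multiplicative (ZMod p)
  let lab (f : ι × ZMod n → M) (i : ι) (j : ℤ) : M := f (i, (j : ZMod n))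
  have lab_periodic (f i) (j m : ℤ) : lab f i (j + m * n) = lab f i j := by simp [lab]
  let F (f : ι × ZMod n → M) : (κ × ZMod n → M) × (ι × Fin (2 * N + 1) → M) :=
    (fun z => holonomy e (lab f) (R z.1) z.2.val, fun z => lab f z.1 ((z.2 : ℕ) - N))
  obtain ⟨f, g, hfg, hF⟩ := Fintype.exists_ne_map_eq_of_card_lt F (by
    have hM : Fintype.card M = p := by simp [M, ZMod.card]
    simp only [Fintype.card_prod, Fintype.card_fun, ZMod.card, Fintype.card_fin, hM, ← pow_add]
    refine Nat.pow_lt_pow_right (Fact.out : p.Prime).one_lt ?_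
    have : (Fintype.card κ + 1) * n ≤ Fintype.card ι * n := Nat.mul_le_mul_right _ hκ
    have : Fintype.card ι * (2 * N + 1) < n := Nat.lt_succ_self _
    linarith)
  have hper (i) (j m : ℤ) : (lab f / lab g) i (j + m * n) = (lab f / lab g) i j := by
    simp [lab_periodic]
  refine ⟨n, hn, lab f / lab g, hper, fun i m l hl hl' => ?_, fun k j => ?_, ?_⟩
  · rw [add_comm, hper]
    have := congrFun (congrArg Prod.snd hF) (i, ⟨(l + N).toNat, by omega⟩)
    have hl0 : max (l + N) 0 - N = l := by omega
    simp only [F, Int.ofNat_toNat, hl0] at this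
    simp [this]
  · have hj : holonomy e (lab f / lab g) (R k) j
        = holonomy e (lab f / lab g) (R k) ((j : ZMod n).val : ℤ) := by
      rw [ZMod.val_intCast]
      conv_lhs => rw [← Int.emod_add_mul_ediv j n, mul_comm (n : ℤ), ← holonomy_shift]
      simp only [hper]
    rw [hj, holonomy_div, div_eq_one]
    exact congrFun (congrArg Prod.fst hF) (k, (j : ZMod n))
  · obtain ⟨⟨i, z⟩, hz⟩ := Function.ne_iff.1 hfg
    refine ⟨i, z.val, by positivity, by exact_mod_cast z.val_lt, ?_⟩
    simpa [lab, div_eq_one] using hz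

end holonomy

end FreeGroup

/-- A group is large if some finite index subgroup maps onto the free group of rank two. -/
def IsLargeGroup (G : Type*) [Group G] : Prop :=
  ∃ H : Subgroup G, H.FiniteIndex ∧ ∃ f : H →* FreeGroup (Fin 2), Function.Surjective f

theorem IsLargeGroup.of_subgroup {G Q : Type*} [Group G] [Group Q] (hQ : IsLargeGroup Q)
    (K : Subgroup G) [hK : K.FiniteIndex] (f : K →* Q) (hf : Function.Surjective f) :
    IsLargeGroup G := by
  obtain ⟨H, hH, g, hg⟩ := hQ
  let e := (H.comap f).equivMapOfInjective K.subtype K.subtype_injective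
  refine ⟨(H.comap f).map K.subtype, ⟨?_⟩, (g.comp (f.subgroupComap H)).comp e.symm.toMonoidHom,
    (hg.comp ?_).comp e.symm.surjective⟩
  · rw [Subgroup.index_map_subtype, Subgroup.index_comap_of_surjective _ hf]
    exact mul_ne_zero hH.index_ne_zero hK.index_ne_zero
  · rintro ⟨h, hh⟩
    obtain ⟨x, rfl⟩ := hf h
    exact ⟨⟨x, hh⟩, rfl⟩

theorem IsLargeGroup.of_quotient {F G Q : Type*} [Group F] [Group G] [Group Q]
    (hQ : IsLargeGroup Q) (π : F →* G) (hπ : Function.Surjective π) (K : Subgroup F)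
    [hK : K.FiniteIndex] (f : K →* Q) (hf : Function.Surjective f)
    (hker : ∀ x : K, π x = 1 → f x = 1) : IsLargeGroup G := by
  have : (K.map π).FiniteIndex :=
    ⟨fun h => hK.index_ne_zero (Nat.eq_zero_of_zero_dvd (h ▸ K.index_map_dvd hπ))⟩
  have hs := π.subgroupMap_surjective K
  let g : K.map π →* Q := (π.subgroupMap K).liftOfSurjective hs
    ⟨f, fun x hx => hker x (congrArg Subtype.val (MonoidHom.mem_ker.1 hx))⟩
  refine hQ.of_subgroup (K.map π) g fun y => ?_
  obtain ⟨x, rfl⟩ := hf y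
  exact ⟨π.subgroupMap K x, MonoidHom.liftOfRightInverse_comp_apply _ _ _ _ x⟩

/-- The translation action of `ℤ/p` on the free group with basis `ℤ/p`. -/
def rotateAut (p : ℕ) : Multiplicative (ZMod p) →* MulAut (FreeGroup (ZMod p)) where
  toFun z := FreeGroup.freeGroupCongr (Equiv.addLeft z.toAdd)
  map_one' := by
    apply MulEquiv.toMonoidHom_injective
    ext i
    simp
  map_mul' z w := by
    apply MulEquiv.toMonoidHom_injective
    ext i
    simp [add_assoc]

/-- The free product of `ℤ` and `ℤ/p`, written as an extension of `ℤ/p` by a free group of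
rank `p`. -/
abbrev IntCoprodZMod (p : ℕ) : Type :=
  FreeGroup (ZMod p) ⋊[rotateAut p] Multiplicative (ZMod p)

theorem IntCoprodZMod.isLargeGroup (p : ℕ) [Fact p.Prime] : IsLargeGroup (IntCoprodZMod p) := by
  let r : IntCoprodZMod p →* Multiplicative (ZMod p) := SemidirectProduct.rightHom
  let l : r.ker →* FreeGroup (ZMod p) :=
    MonoidHom.mk' (fun x => x.1.left) fun x y => by
      have hx : x.1.right = 1 := x.2
      simp [hx]
  let c (z : ZMod p) : Fin 2 := if z = 0 then 0 else 1
  have hc : Function.Surjective c := by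
    rw [Function.Surjective, Fin.forall_fin_two]
    exact ⟨⟨0, by simp [c]⟩, ⟨1, by simp [c]⟩⟩
  refine ⟨r.ker, inferInstance, (FreeGroup.map c).comp l,
    (FreeGroup.map_surjective hc).comp fun x => ?_⟩
  exact ⟨⟨SemidirectProduct.inl x, SemidirectProduct.rightHom_inl x⟩, rfl⟩

theorem IntCoprodZMod.eq_top_of_mem (p : ℕ) (S : Subgroup (IntCoprodZMod p))
    (hl : SemidirectProduct.inl (FreeGroup.of 0) ∈ S)
    (hr : ∀ z, SemidirectProduct.inr z ∈ S) : S = ⊤ := by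
  have hS (x : FreeGroup (ZMod p)) : (SemidirectProduct.inl x : IntCoprodZMod p) ∈ S := by
    induction x using FreeGroup.induction_on with
    | C1 => simp [one_mem]
    | of i =>
      have h := SemidirectProduct.inl_aut (φ := rotateAut p) (Multiplicative.ofAdd i)
        (FreeGroup.of 0)
      have hi : rotateAut p (Multiplicative.ofAdd i) (FreeGroup.of 0) = FreeGroup.of i := by
        simp [rotateAut]
      rw [← hi, h]
      exact mul_mem (mul_mem (hr _) hl) (hr _)
    | inv_of i hi => simpa using hi
    | mul x y hx hy => simpa using mul_mem hx hy
  refine (Subgroup.eq_top_iff' S).2 fun x => ?_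
  rw [← SemidirectProduct.inl_left_mul_inr_right x]
  exact mul_mem (hS _) (hr _)

namespace FreeGroup

variable {ι Q : Type*} [Group Q] (e : ι → ℤ)

/-- A labelling is twisted periodic if translating by the period conjugates the labels; its
holonomy is then twisted periodic as well. -/
theorem holonomy_add_mul_of_twisted {a : ι → ℤ → Q} {n : ℤ} {s : Q}
    (ha : ∀ i j m, a i (j + m * n) = s ^ m * a i j * (s ^ m)⁻¹) (x : FreeGroup ι) (j m : ℤ) :
    holonomy e a x (j + m * n) = s ^ m * holonomy e a x j * (s ^ m)⁻¹ := by
  rw [← holonomy_shift]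
  simp only [ha]
  exact holonomy_comp e a x j (MulAut.conj (s ^ m)).toMonoidHom

/-- The subgroup of elements whose height is divisible by `n`. -/
def heightSubgroup (n : ℕ) : Subgroup (FreeGroup ι) :=
  (AddMonoidHom.toMultiplicative (Int.castAddHom (ZMod n)) |>.comp
    (FreeGroup.lift fun i => Multiplicative.ofAdd (e i))).ker

theorem mem_heightSubgroup {n : ℕ} {x : FreeGroup ι} :
    x ∈ heightSubgroup e n ↔ (n : ℤ) ∣ height e x :=
  ZMod.intCast_zmod_eq_zero_iff_dvd (height e x) n

instance (n : ℕ) [NeZero n] : (heightSubgroup e n).FiniteIndex :=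
  Subgroup.finiteIndex_ker _

/-- The homomorphism induced by a twisted periodic labelling on the elements whose height is
divisible by the period. -/
def twistedHolonomy {a : ι → ℤ → Q} {n : ℕ} {s : Q} (hn : 0 < n)
    (ha : ∀ i j m, a i (j + m * n) = s ^ m * a i j * (s ^ m)⁻¹) : heightSubgroup e n →* Q :=
  MonoidHom.mk' (fun x => holonomy e a x 0 * s ^ (height e x.1 / n)) fun x y => by
    obtain ⟨m, hm⟩ := exists_eq_mul_left_of_dvd ((mem_heightSubgroup e).1 x.2)
    obtain ⟨l, hl⟩ := exists_eq_mul_left_of_dvd ((mem_heightSubgroup e).1 y.2)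
    have hn' : (n : ℤ) ≠ 0 := by exact_mod_cast hn.ne'
    simp only [Subgroup.coe_mul, holonomy_mul, height_mul, hm, hl, ← add_mul,
      Int.mul_ediv_cancel _ hn', holonomy_add_mul_of_twisted e ha y 0 m, zpow_add]
    group

end FreeGroup

namespace FreeGroup

variable {ι : Type*} (e : ι → ℤ)

/-- The twisted periodic labelling with values in `ℤ * ℤ/p` obtained by conjugating a labelling `b`
by the power of the infinite order generator that counts the periods. -/
def twist {p : ℕ} (n : ℕ) (b : ι → ℤ → Multiplicative (ZMod p)) (i : ι) (j : ℤ) :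
    IntCoprodZMod p :=
  SemidirectProduct.inl (of 0) ^ (j / n) * SemidirectProduct.inr (b i j) *
    (SemidirectProduct.inl (of 0) ^ (j / n))⁻¹

theorem twist_add_mul {p n : ℕ} (hn : 0 < n) {b : ι → ℤ → Multiplicative (ZMod p)}
    (hb : ∀ i j m, b i (j + m * n) = b i j) (i : ι) (j m : ℤ) :
    twist n b i (j + m * n) = SemidirectProduct.inl (of 0) ^ m * twist n b i j *
      (SemidirectProduct.inl (of 0) ^ m)⁻¹ := by
  have hn' : (n : ℤ) ≠ 0 := by exact_mod_cast hn.ne'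
  simp only [twist, hb, Int.add_mul_ediv_right _ _ hn', add_comm _ m, zpow_add]
  group

/-- If `b` vanishes near the multiples of the period, then the holonomy of its twist along a short
word is conjugate to the holonomy of `b`. -/
theorem exists_holonomy_twist {p n N : ℕ} (hn : 0 < n) {b : ι → ℤ → Multiplicative (ZMod p)}
    (hb : ∀ i (m l : ℤ), -(2 * N : ℕ) ≤ l → l ≤ (2 * N : ℕ) → b i (m * n + l) = 1)
    {x : FreeGroup ι}
    (hx : ∀ (a a' : ι → ℤ → IntCoprodZMod p) (j : ℤ),
      (∀ i h, j - N ≤ h → h ≤ j + N → a i h = a' i h) → holonomy e a x j = holonomy e a' x j)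
    (j : ℤ) :
    ∃ g, holonomy e (twist n b) x j
      = g * SemidirectProduct.inr (holonomy e b x j) * g⁻¹ := by
  suffices ∃ g, ∀ i h, j - N ≤ h → h ≤ j + N →
      twist n b i h = g * SemidirectProduct.inr (b i h) * g⁻¹ by
    obtain ⟨g, hg⟩ := this
    refine ⟨g, (hx _ _ j hg).trans ?_⟩
    exact holonomy_comp e b x j ((MulAut.conj g).toMonoidHom.comp SemidirectProduct.inr)
  by_cases hm : ∃ m : ℤ, j - N ≤ m * n ∧ m * n ≤ j + N
  · obtain ⟨m, hm₁, hm₂⟩ := hm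
    refine ⟨1, fun i h h₁ h₂ => ?_⟩
    have : b i h = 1 := by
      simpa using hb i m (h - m * n) (by push_cast; omega) (by push_cast; omega)
    simp [twist, this]
  · push Not at hm
    refine ⟨SemidirectProduct.inl (of 0) ^ (j / n), fun i h h₁ h₂ => ?_⟩
    have hn' : (0 : ℤ) < n := by exact_mod_cast hn
    have hj₁ := Int.ediv_mul_le j hn'.ne'
    have hj₂ := Int.lt_ediv_add_one_mul_self j hn'
    have hk : h / n = j / n := by
      have h₃ := hm (j / n)
      have h₄ := hm (j / n + 1)
      rw [add_one_mul] at hj₂ h₄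
      rw [Int.ediv_eq_iff_of_pos hn']
      constructor <;> omega
    rw [twist, hk]

theorem twistedHolonomy_surjective {p n : ℕ} [Fact p.Prime] (hn : 0 < n)
    {b : ι → ℤ → Multiplicative (ZMod p)} (hb : ∀ i j m, b i (j + m * n) = b i j)
    {u : FreeGroup ι} (hu : height e u = 1) (hu' : ∀ j, holonomy e (twist n b) u j = 1)
    {i : ι} {j : ℤ} (hj : 0 ≤ j) (hj' : j < n) (hij : b i j ≠ 1) :
    Function.Surjective (twistedHolonomy e hn (twist_add_mul hn hb)) := by
  have hn' : (n : ℤ) ≠ 0 := by exact_mod_cast hn.ne'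
  set f := twistedHolonomy e hn (twist_add_mul hn hb)
  have hf' (x) : f x = holonomy e (twist n b) x 0 *
    SemidirectProduct.inl (of 0) ^ (height e x.1 / n) := rfl
  rw [← MonoidHom.range_eq_top]
  refine IntCoprodZMod.eq_top_of_mem p _ ⟨⟨u ^ n, ?_⟩, ?_⟩ fun z => ?_
  · simp [mem_heightSubgroup, hu]
  · simp [hf', hu, holonomy_pow_eq_one _ _ _ _ hu', Int.ediv_self hn']
  · have hmem : SemidirectProduct.inr (b i j) ∈ f.range := by
      have h0 : height e (u ^ j * of i * u ^ (-e i - j)) = 0 := by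
        simp only [height_mul, height_zpow, hu, height_of]
        ring
      refine ⟨⟨u ^ j * of i * u ^ (-e i - j), ?_⟩, ?_⟩
      · simp [mem_heightSubgroup, h0]
      · simp [hf', h0, holonomy_mul, holonomy_zpow_eq_one _ _ _ _ hu', hu, twist,
          Int.ediv_eq_zero_of_lt hj hj']
    have hz : z = b i j ^ (z.toAdd / (b i j).toAdd).val := by
      apply Multiplicative.toAdd.injective
      have : (b i j).toAdd ≠ 0 := hij
      rw [toAdd_pow, nsmul_eq_mul, ZMod.natCast_zmod_val, div_mul_cancel₀ _ this]
    rw [hz, map_pow]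
    exact pow_mem hmem _

end FreeGroup

/-- **Corollary 1.4 (Baumslag–Pride conjecture; Gromov, Stöhr).** Let `G` be a group
having a finite presentation with one more generator than relations (here `π` is the
quotient map from the free group on the finite type `α` of generators, whose kernel is
the normal closure of the finite set `Rel` of relations, with `|α| = |Rel| + 1`), and
suppose that one of the relations is a proper power `w^q` with `q ≥ 2`.  Then `G` has a
finite index subgroup that admits a surjective homomorphism onto a non-abelian free
group. -/
theorem stmt12 (G : Type*) [Group G]
    (α : Type) [Fintype α]
    (π : FreeGroup α →* G) (hsurj : Function.Surjective π)
    (Rel : Finset (FreeGroup α))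
    (hker : π.ker = Subgroup.normalClosure (Rel : Set (FreeGroup α)))
    (hcard : Fintype.card α = Rel.card + 1)
    (hpow : ∃ ρ ∈ Rel, ∃ w : FreeGroup α, ∃ q : ℕ, 2 ≤ q ∧ ρ = w ^ q) :
    ∃ H : Subgroup G, H.FiniteIndex ∧
      ∃ f : ↥H →* FreeGroup (Fin 2), Function.Surjective f := by
  classical
  change IsLargeGroup G
  obtain ⟨ρ, hρ, w, q, hq, rfl⟩ := hpow
  obtain ⟨p, hp, hpq⟩ := Nat.exists_prime_and_dvd (show q ≠ 1 by omega)
  have : Fact p.Prime := ⟨hp⟩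
  have hlt : Fintype.card Rel < Fintype.card α := by simp [hcard]
  obtain ⟨e, he, u, hu⟩ := FreeGroup.exists_height_eq_one (fun r : Rel => r.1) hlt
  obtain ⟨N, hN⟩ := FreeGroup.exists_radius_finset e (insert w (insert u Rel)) (IntCoprodZMod p)
  obtain ⟨n, hn, b, hper, hwin, hb, i, j, hj, hj', hij⟩ :=
    FreeGroup.exists_periodic_labelling e (fun r : Rel => if r.1 = w ^ q then u else r.1) hlt p
      (2 * N)
  have : NeZero n := ⟨hn.ne'⟩
  have htwist (x) (hx : x ∈ insert w (insert u Rel)) :=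
    FreeGroup.exists_holonomy_twist e hn hwin (hN x hx)
  have hu' (j : ℤ) : FreeGroup.holonomy e (FreeGroup.twist n b) u j = 1 := by
    obtain ⟨g, hg⟩ := htwist u (by simp) j
    have := hb ⟨_, hρ⟩ j
    simp only [if_true] at this
    simp [hg, this]
  have hrel : ∀ r ∈ Rel, FreeGroup.toShift e (FreeGroup.twist n b) r = 1 := by
    refine fun r hr => SemidirectProduct.ext (funext fun j => ?_) ?_
    · change FreeGroup.holonomy e (FreeGroup.twist n b) r j = 1
      by_cases hrw : r = w ^ q
      · subst hrw
        have hw : FreeGroup.height e w = 0 := by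
          have := he ⟨_, hr⟩
          rw [FreeGroup.height_pow] at this
          exact (mul_eq_zero.1 this).resolve_left (by omega)
        obtain ⟨g, hg⟩ := htwist w (by simp) j
        have hq1 : FreeGroup.holonomy e b w j ^ q = 1 := by
          apply Multiplicative.toAdd.injective
          rw [toAdd_pow, nsmul_eq_mul, (ZMod.natCast_eq_zero_iff q p).2 hpq, zero_mul, toAdd_one]
        rw [FreeGroup.holonomy_pow_of_height_eq_zero _ _ _ _ hw, hg, conj_pow, ← map_pow, hq1]
        simp
      · obtain ⟨g, hg⟩ := htwist r (by simp [hr]) j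
        have := hb ⟨r, hr⟩ j
        simp only [hrw, if_false] at this
        simp [hg, this]
    · rw [FreeGroup.toShift_right, he ⟨r, hr⟩]
      rfl
  have hle : π.ker ≤ (FreeGroup.toShift e (FreeGroup.twist n b)).ker :=
    hker ▸ Subgroup.normalClosure_le_normal hrel
  refine (IntCoprodZMod.isLargeGroup p).of_quotient π hsurj (FreeGroup.heightSubgroup e n)
    (FreeGroup.twistedHolonomy e hn (FreeGroup.twist_add_mul hn hper))
    (FreeGroup.twistedHolonomy_surjective e hn hper hu hu' hj hj' hij) fun x hx => ?_
  have hx' : FreeGroup.toShift e (FreeGroup.twist n b) x = 1 := hle hx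
  have h0 : FreeGroup.height e x.1 = 0 := by
    have := FreeGroup.toShift_right e x.1 (FreeGroup.twist n b)
    rw [hx'] at this
    exact (Multiplicative.ofAdd.injective this).symm
  change (FreeGroup.toShift e (FreeGroup.twist n b) x).left 0 * _ ^ (FreeGroup.height e x.1 / n) = 1
  simp [hx', h0]
end

section
/- Let G be a finitely presented group. Then there is a constant k > 1 with the following property: if H is any finite index subgroup of G, then either the abelianisation H/[H,H] is infinite, or |H/[H,H]| ≤ k^{[G : H]}. -/
/-- `G` is a finitely presented group: it is the quotient of a finitely generated free
group by the normal closure of finitely many relations. -/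
def IsFinitelyPresented (G : Type*) [Group G] : Prop :=
  ∃ (n : ℕ) (φ : FreeGroup (Fin n) →* G) (R : Finset (FreeGroup (Fin n))),
    Function.Surjective φ ∧ φ.ker = Subgroup.normalClosure (R : Set (FreeGroup (Fin n)))

theorem Matrix.abs_det_le_prod_sum_abs {ι : Type*} [Fintype ι] [DecidableEq ι]
    (A : Matrix ι ι ℤ) : |A.det| ≤ ∏ i, ∑ j, |A i j| := by
  rw [← Matrix.det_transpose, Matrix.det_apply', Finset.prod_univ_sum, Fintype.piFinset_univ]
  calc |∑ σ : Equiv.Perm ι, ((Equiv.Perm.sign σ : ℤˣ) : ℤ) * ∏ i, A.transpose (σ i) i|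
      ≤ ∑ σ : Equiv.Perm ι, |((Equiv.Perm.sign σ : ℤˣ) : ℤ) * ∏ i, A.transpose (σ i) i| :=
        Finset.abs_sum_le_sum_abs _ _
    _ = ∑ σ : Equiv.Perm ι, ∏ i, |A i (σ i)| := by
        refine Finset.sum_congr rfl fun σ _ => ?_
        rw [abs_mul, Int.isUnit_iff_abs_eq.1 (Units.isUnit _), one_mul, Finset.abs_prod]
        rfl
    _ = ∑ f ∈ (Finset.univ : Finset (Equiv.Perm ι)).map ⟨_, DFunLike.coe_injective⟩,
          ∏ i, |A i (f i)| := by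
        rw [Finset.sum_map]; rfl
    _ ≤ ∑ f : ι → ι, ∏ i, |A i (f i)| :=
        Finset.sum_le_sum_of_subset_of_nonneg (Finset.subset_univ _)
          fun f _ _ => Finset.prod_nonneg fun i _ => abs_nonneg _

theorem exists_det_ne_zero_of_finite_quotient_span {ι : Type*} [Fintype ι] [DecidableEq ι]
    (V : Set (ι → ℤ)) (hfin : Finite ((ι → ℤ) ⧸ Submodule.span ℤ V)) :
    ∃ P : Matrix ι ι ℤ, (∀ i, P i ∈ V) ∧ P.det ≠ 0 := by
  let c : (ι → ℤ) →ₗ[ℤ] (ι → ℚ) :=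
    { toFun := fun v i => v i
      map_add' := fun v w => by ext; simp
      map_smul' := fun n v => by ext; simp }
  have hc : ∀ v ∈ Submodule.span ℤ V, c v ∈ Submodule.span ℚ (c '' V) := by
    intro v hv
    have := Submodule.mem_map_of_mem (f := c) hv
    rw [Submodule.map_span] at this
    exact Submodule.span_subset_span ℤ ℚ _ this
  have hspan : Submodule.span ℚ (c '' V) = ⊤ := by
    rw [eq_top_iff, ← (Pi.basisFun ℚ ι).span_eq, Submodule.span_le]
    rintro _ ⟨i, rfl⟩
    set n := Nat.card ((ι → ℤ) ⧸ Submodule.span ℤ V)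
    have hn : (n : ℚ) ≠ 0 := by exact_mod_cast Nat.card_pos.ne'
    have hmem : n • (Pi.single i 1 : ι → ℤ) ∈ Submodule.span ℤ V := by
      rw [← Submodule.Quotient.mk_eq_zero, Submodule.Quotient.mk_smul]
      exact card_nsmul_eq_zero'
    have h := Submodule.smul_mem _ (n : ℚ)⁻¹ (hc _ hmem)
    have e : (n : ℚ)⁻¹ • c (n • (Pi.single i 1 : ι → ℤ)) = Pi.basisFun ℚ ι i := by
      ext j
      by_cases hj : j = i
      · subst hj; simp [c, hn]
      · simp [c, hj]
    rwa [e] at h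
  obtain ⟨t, htV, htspan, hli⟩ := exists_linearIndependent ℚ (c '' V)
  let b : Module.Basis t ℚ (ι → ℚ) := .mk hli (by simp [htspan, hspan])
  let e : ι ≃ t := (Pi.basisFun ℚ ι).indexEquiv b
  choose P hP hcP using fun i => htV (e i).2
  refine ⟨P, hP, fun h0 => ?_⟩
  have hQ : LinearIndependent ℚ (fun i => c (P i)) := by
    simp only [hcP]
    exact hli.comp e e.injective
  have hU := (Matrix.linearIndependent_rows_iff_isUnit
    (A := (Matrix.of P).map (Int.cast : ℤ → ℚ))).1 hQ
  rw [Matrix.isUnit_iff_isUnit_det, ← Int.cast_det] at hU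
  exact hU.ne_zero (Int.cast_eq_zero.2 h0)

theorem card_quotient_span_range_eq_natAbs_det {ι : Type*} [Fintype ι] [DecidableEq ι]
    (P : Matrix ι ι ℤ) (hP : P.det ≠ 0) :
    Nat.card ((ι → ℤ) ⧸ Submodule.span ℤ (Set.range P)) = P.det.natAbs := by
  have hli : LinearIndependent ℤ (fun i => P i) := Matrix.linearIndependent_rows_of_det_ne_zero hP
  have h := Submodule.natAbs_det_basis_change (Pi.basisFun ℤ ι) _ (Module.Basis.span hli)
  rw [← h, Pi.basisFun_det_apply]
  congr 2
  ext i j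
  simp [Module.Basis.span_apply]

theorem card_quotient_span_le_pow {ι : Type*} [Fintype ι] (V : Set (ι → ℤ)) (L : ℕ)
    (hV : ∀ v ∈ V, ∑ i, |v i| ≤ L) (hfin : Finite ((ι → ℤ) ⧸ Submodule.span ℤ V)) :
    Nat.card ((ι → ℤ) ⧸ Submodule.span ℤ V) ≤ L ^ Fintype.card ι := by
  classical
  obtain ⟨P, hPV, hP⟩ := exists_det_ne_zero_of_finite_quotient_span V hfin
  have hcard := card_quotient_span_range_eq_natAbs_det P hP
  have : Finite ((ι → ℤ) ⧸ Submodule.span ℤ (Set.range P)) :=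
    Nat.finite_of_card_ne_zero (by simpa [hcard] using hP)
  have hle : Submodule.span ℤ (Set.range P) ≤ Submodule.span ℤ V :=
    Submodule.span_mono (Set.range_subset_iff.2 hPV)
  calc Nat.card ((ι → ℤ) ⧸ Submodule.span ℤ V)
      ≤ Nat.card ((ι → ℤ) ⧸ Submodule.span ℤ (Set.range P)) :=
        Nat.card_le_card_of_surjective _ (Submodule.factor_surjective hle)
    _ = P.det.natAbs := hcard
    _ ≤ L ^ Fintype.card ι := by
        zify
        refine P.abs_det_le_prod_sum_abs.trans ?_
        exact (Finset.prod_le_prod (fun i _ => Finset.sum_nonneg fun j _ => abs_nonneg _)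
          fun i _ => hV _ (hPV i)).trans (by simp)

theorem finite_quotient_of_forall_smul_single_mem {ι : Type*} [Fintype ι] [DecidableEq ι]
    (B : Submodule ℤ (ι → ℤ)) (h : ∀ i, ∃ n : ℤ, n ≠ 0 ∧ n • (Pi.single i 1 : ι → ℤ) ∈ B) :
    Finite ((ι → ℤ) ⧸ B) := by
  choose n hn hmem using h
  refine Module.finite_of_fg_torsion _ fun x => ?_
  obtain ⟨v, rfl⟩ := B.mkQ_surjective x
  refine ⟨⟨∏ i, n i, mem_nonZeroDivisors_of_ne_zero (Finset.prod_ne_zero_iff.2 fun i _ => hn i)⟩, ?_⟩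
  change (∏ i, n i) • B.mkQ v = 0
  rw [← map_smul, Submodule.mkQ_apply, Submodule.Quotient.mk_eq_zero, pi_eq_sum_univ' v,
    Finset.smul_sum]
  refine Submodule.sum_mem _ fun i _ => ?_
  rw [smul_comm, ← Finset.prod_erase_mul _ _ (Finset.mem_univ i), mul_smul]
  refine Submodule.smul_mem _ _ (Submodule.smul_mem _ _ ?_)
  convert hmem i using 2

/-- A finite group embedded in a quotient of `ℤ^ι` by vectors of `ℓ¹` norm at most `L` has
order at most `L ^ |ι|`. -/
theorem card_le_pow_of_injective_quotient_span {ι A : Type*} [Fintype ι] [AddCommGroup A]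
    [Finite A] (V : Set (ι → ℤ)) (L : ℕ) (hL : 1 ≤ L) (hV : ∀ v ∈ V, ∑ i, |v i| ≤ L)
    (f : A →+ (ι → ℤ) ⧸ Submodule.span ℤ V) (hf : Function.Injective f) :
    Nat.card A ≤ L ^ Fintype.card ι := by
  classical
  let E : Set ι → Set (ι → ℤ) := fun J => (fun i => Pi.single i 1) '' J
  let W : Set ι → Submodule ℤ (ι → ℤ) := fun J => Submodule.span ℤ (V ∪ E J)
  have hVW : ∀ J, Submodule.span ℤ V ≤ W J := fun J => Submodule.span_mono Set.subset_union_left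
  let g : ∀ J, A →+ (ι → ℤ) ⧸ W J := fun J =>
    (Submodule.factor (hVW J)).toAddMonoidHom.comp f
  have hg : ∀ J v a, f a = Submodule.mkQ _ v → (g J a = 0 ↔ v ∈ W J) := fun J v a hv => by
    rw [← Submodule.Quotient.mk_eq_zero]
    simp only [g, AddMonoidHom.comp_apply, hv]
    rfl
  obtain ⟨J, hJ⟩ : ∃ J, Maximal (fun J => Function.Injective (g J)) J := by
    refine Set.Finite.exists_maximal (Set.toFinite _) ⟨∅, ?_⟩
    refine (injective_iff_map_eq_zero (g ∅)).2 fun a ha => hf ?_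
    obtain ⟨v, hv⟩ := Submodule.mkQ_surjective _ (f a)
    rw [hg ∅ v a hv.symm] at ha
    rw [map_zero, ← hv, Submodule.mkQ_apply, Submodule.Quotient.mk_eq_zero]
    simpa [W, E] using ha
  have hfin : Finite ((ι → ℤ) ⧸ W J) := by
    refine finite_quotient_of_forall_smul_single_mem _ fun i => ?_
    by_cases hi : i ∈ J
    · exact ⟨1, one_ne_zero, by
        rw [one_smul]
        exact Submodule.subset_span (Or.inr (Set.mem_image_of_mem _ hi))⟩
    have hnot : ¬ Function.Injective (g (insert i J)) := fun h =>
      hi (hJ.2 h (Set.subset_insert i J) (Set.mem_insert i J))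
    rw [injective_iff_map_eq_zero] at hnot
    push Not at hnot
    obtain ⟨a, ha, ha0⟩ := hnot
    obtain ⟨v, hv⟩ := Submodule.mkQ_surjective _ (f a)
    have hWi : W (insert i J) = Submodule.span ℤ (insert (Pi.single i 1) (V ∪ E J)) := by
      simp only [W, E, Set.image_insert_eq, Set.union_insert]
    rw [hg _ v a hv.symm, hWi, Submodule.mem_span_insert] at ha
    obtain ⟨n, w, hw, rfl⟩ := ha
    have hA : (Nat.card A : ℤ) ≠ 0 := by exact_mod_cast Nat.card_pos.ne'
    refine ⟨Nat.card A * n, mul_ne_zero hA ?_, ?_⟩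
    · rintro rfl
      refine ha0 (hJ.1 ?_)
      rw [map_zero, hg _ _ a hv.symm]
      rwa [zero_smul, zero_add]
    · have hcv : (Nat.card A : ℤ) • (n • (Pi.single i 1 : ι → ℤ) + w) ∈ W J := by
        rw [← hg J _ (Nat.card A • a) (by rw [map_nsmul, ← hv, map_smul, natCast_zsmul]),
          card_nsmul_eq_zero', map_zero]
      rw [smul_add, ← mul_smul] at hcv
      exact (Submodule.add_mem_iff_left _ (Submodule.smul_mem _ _ hw)).1 hcv
  refine (Nat.card_le_card_of_injective _ hJ.1).trans (card_quotient_span_le_pow _ L ?_ hfin)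
  rintro v (hv | ⟨i, -, rfl⟩)
  · exact hV v hv
  · have : ∑ j, |(Pi.single i 1 : ι → ℤ) j| = 1 := by
      rw [Finset.sum_eq_single i] <;> simp +contextual
    simpa [this] using hL

/-- An additive `1`-cocycle for the action of a group on a set, with constant coefficients. -/
def IsActionCocycle {F X M : Type*} [Group F] [MulAction F X] [AddCommGroup M]
    (c : F → X → M) : Prop :=
  ∀ w w' x, c (w * w') x = c w (w' • x) + c w' x

namespace IsActionCocycle

variable {F X M N α : Type*} [Group F] [MulAction F X] [AddCommGroup M] [AddCommGroup N]

theorem map_one {c : F → X → M} (hc : IsActionCocycle c) (x : X) : c 1 x = 0 := by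
  simpa using hc 1 1 x

theorem map_inv {c : F → X → M} (hc : IsActionCocycle c) (w : F) (x : X) :
    c w⁻¹ x = -c w (w⁻¹ • x) := by
  have h := hc w w⁻¹ x
  rw [mul_inv_cancel, hc.map_one] at h
  exact (neg_eq_of_add_eq_zero_right h.symm).symm

theorem comp {c : F → X → M} (hc : IsActionCocycle c) (f : M →+ N) :
    IsActionCocycle fun w x => f (c w x) := fun w w' x => by
  simp only [hc w w' x, map_add]

/-- The normal subgroup of elements that act trivially and on which the cocycle vanishes. -/
def kernel {c : F → X → M} (hc : IsActionCocycle c) : Subgroup F where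
  carrier := {w | ∀ x, w • x = x ∧ c w x = 0}
  one_mem' x := ⟨one_smul _ x, hc.map_one x⟩
  mul_mem' {a b} ha hb x := by
    refine ⟨by rw [mul_smul, (hb x).1, (ha x).1], ?_⟩
    rw [hc, (hb x).1, (ha x).2, (hb x).2, add_zero]
  inv_mem' {a} ha x := by
    have h : a⁻¹ • x = x := inv_smul_eq_iff.2 (ha x).1.symm
    exact ⟨h, by rw [hc.map_inv, h, (ha x).2, neg_zero]⟩

instance kernel_normal {c : F → X → M} (hc : IsActionCocycle c) : hc.kernel.Normal where
  conj_mem n hn g x := by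
    have h := hn (g⁻¹ • x)
    refine ⟨by rw [mul_smul, mul_smul, h.1, smul_inv_smul], ?_⟩
    rw [hc, hc, h.1, h.2, hc.map_inv, add_zero, add_neg_cancel]

theorem eq_of_eq_on_generators [MulAction (FreeGroup α) X] {c d : FreeGroup α → X → M}
    (hc : IsActionCocycle c) (hd : IsActionCocycle d)
    (h : ∀ s x, c (FreeGroup.of s) x = d (FreeGroup.of s) x) (w : FreeGroup α) (x : X) :
    c w x = d w x := by
  induction w using FreeGroup.induction_on generalizing x with
  | C1 => rw [hc.map_one, hd.map_one]
  | of s => exact h s x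
  | inv_of s _ => rw [hc.map_inv, hd.map_inv, h]
  | mul w w' hw hw' => rw [hc, hd, hw, hw']

theorem exists_of_generators [MulAction (FreeGroup α) X] (e : α → X → M) :
    ∃ c : FreeGroup α → X → M, IsActionCocycle c ∧ ∀ s x, c (FreeGroup.of s) x = e s x := by
  let f : FreeGroup α →* (X → Multiplicative M) ⋊[mulAutArrow] FreeGroup α :=
    FreeGroup.lift fun s =>
      ⟨fun x => .ofAdd (e s ((FreeGroup.of s)⁻¹ • x)), FreeGroup.of s⟩
  have hright : ∀ w, (f w).right = w := by
    have : SemidirectProduct.rightHom.comp f = MonoidHom.id _ := by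
      ext s; simp [f]
    exact DFunLike.congr_fun this
  refine ⟨fun w x => ((f w).left (w • x)).toAdd, fun w w' x => ?_, fun s x => ?_⟩
  · simp only [map_mul, SemidirectProduct.mul_left, hright, mul_smul, Pi.mul_apply, toAdd_mul,
      mulAutArrow_apply_apply]
    exact congrArg (fun y => _ + ((f w').left y).toAdd) (inv_smul_smul w (w' • x))
  · simp [f]

theorem sum_abs_le_norm {ι : Type*} [Fintype ι] [DecidableEq α] [MulAction (FreeGroup α) X]
    {c : FreeGroup α → X → ι → ℤ} (hc : IsActionCocycle c)
    (h : ∀ s x, ∑ i, |c (FreeGroup.of s) x i| ≤ 1) (w : FreeGroup α) (x : X) :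
    ∑ i, |c w x i| ≤ w.norm := by
  have key : ∀ (l : List (α × Bool)) (x : X), ∑ i, |c (FreeGroup.mk l) x i| ≤ l.length := by
    intro l
    induction l with
    | nil => intro x; simp [← FreeGroup.one_eq_mk, hc.map_one]
    | cons a l ih =>
      intro x
      have hsingle : ∀ y, ∑ i, |c (FreeGroup.mk [a]) y i| ≤ 1 := by
        intro y
        obtain ⟨s, b⟩ := a
        cases b
        · have hs : FreeGroup.mk [(s, false)] = (FreeGroup.of s)⁻¹ := rfl
          simpa [hs, hc.map_inv] using h s ((FreeGroup.of s)⁻¹ • y)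
        · exact h s y
      have hmul : FreeGroup.mk (a :: l) = FreeGroup.mk [a] * FreeGroup.mk l := by
        simp [FreeGroup.mul_mk]
      calc ∑ i, |c (FreeGroup.mk (a :: l)) x i|
          ≤ ∑ i, (|c (FreeGroup.mk [a]) (FreeGroup.mk l • x) i| + |c (FreeGroup.mk l) x i|) := by
            rw [hmul, hc]
            exact Finset.sum_le_sum fun i _ => abs_add_le _ _
        _ ≤ 1 + l.length := by
            rw [Finset.sum_add_distrib]
            exact add_le_add (hsingle _) (ih x)
        _ = (a :: l).length := by simp [add_comm]
  simpa only [FreeGroup.mk_toWord, FreeGroup.norm] using key w.toWord x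

end IsActionCocycle

/-- A transversal of a subgroup induces a cocycle with values in its abelianisation. -/
theorem exists_isActionCocycle_abelianization {F G : Type*} [Group F] [Group G] (φ : F →* G)
    (H : Subgroup G) :
    ∃ d : F → F ⧸ H.comap φ → Additive (Abelianization H), IsActionCocycle d ∧
      (∀ w (x : F ⧸ H.comap φ), w ∈ φ.ker → w • x = x → d w x = 0) ∧
      ∀ w (hw : φ w ∈ H), d w ((1 : F) : F ⧸ H.comap φ) =
        Additive.ofMul (Abelianization.of ⟨φ w, hw⟩) := by
  have hmem : ∀ (w : F) (x : F ⧸ H.comap φ),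
      φ ((w • x).out⁻¹ * w * x.out) ∈ H := fun w x => by
    rw [← Subgroup.mem_comap, mul_assoc, ← QuotientGroup.eq, QuotientGroup.out_eq',
      ← smul_eq_mul, MulAction.Quotient.coe_smul_out]
  refine ⟨fun w x => Additive.ofMul (Abelianization.of ⟨_, hmem w x⟩), fun w w' x => ?_,
    fun w x hw hx => ?_, fun w hw => ?_⟩
  · rw [← ofMul_mul, ← map_mul]
    simp [mul_smul, mul_assoc]
  · rw [← ofMul_one, ← map_one Abelianization.of]
    refine congrArg _ (congrArg _ (Subtype.ext ?_))
    simp [hx, MonoidHom.mem_ker.1 hw]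
  · have hx : w • ((1 : F) : F ⧸ H.comap φ) = ((1 : F) : F ⧸ H.comap φ) := by
      rw [MulAction.Quotient.smul_coe, smul_eq_mul, mul_one, eq_comm, QuotientGroup.eq]
      simpa using hw
    have h0 : φ ((1 : F) : F ⧸ H.comap φ).out ∈ H := by
      rw [← Subgroup.mem_comap]
      have := QuotientGroup.out_eq' ((1 : F) : F ⧸ H.comap φ)
      rw [eq_comm, QuotientGroup.eq] at this
      simpa using this
    have : (⟨_, hmem w ((1 : F) : F ⧸ H.comap φ)⟩ : H) = ⟨_, h0⟩⁻¹ * ⟨φ w, hw⟩ * ⟨_, h0⟩ := by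
      ext
      simp [hx]
    refine congrArg Additive.ofMul ?_
    rw [this, map_mul, map_mul, map_inv, mul_right_comm, inv_mul_cancel, one_mul]

theorem card_abelianization_le_pow {α G : Type*} [Fintype α] [DecidableEq α] [Group G]
    (φ : FreeGroup α →* G) (hφ : Function.Surjective φ) (R : Set (FreeGroup α))
    (hker : φ.ker = Subgroup.normalClosure R) (L : ℕ) (hL : 1 ≤ L) (hR : ∀ r ∈ R, r.norm ≤ L)
    (H : Subgroup G) [H.FiniteIndex] [Finite (Abelianization H)] :
    Nat.card (Abelianization H) ≤ L ^ (Fintype.card α * H.index) := by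
  classical
  let X := FreeGroup α ⧸ H.comap φ
  have hindex : (H.comap φ).index = H.index := H.index_comap_of_surjective hφ
  have : (H.comap φ).FiniteIndex := ⟨by rw [hindex]; exact Subgroup.FiniteIndex.index_ne_zero⟩
  let _ : Fintype X := Fintype.ofFinite X
  obtain ⟨c, hc, hcgen⟩ := IsActionCocycle.exists_of_generators
    fun (s : α) (x : X) => (Pi.single (s, x) 1 : α × X → ℤ)
  obtain ⟨d, hd, hdker, hdbase⟩ := exists_isActionCocycle_abelianization φ H
  let ρ : (α × X → ℤ) →ₗ[ℤ] Additive (Abelianization H) :=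
    (Pi.basisFun ℤ (α × X)).constr ℤ fun p => d (FreeGroup.of p.1) p.2
  have hρ : ∀ w x, ρ (c w x) = d w x :=
    (hc.comp ρ.toAddMonoidHom).eq_of_eq_on_generators hd fun s x => by
      have := (Pi.basisFun ℤ (α × X)).constr_basis ℤ (fun p => d (FreeGroup.of p.1) p.2) (s, x)
      rw [Pi.basisFun_apply] at this
      rw [hcgen]
      exact this
  let V : Set (α × X → ℤ) := {v | ∃ r ∈ R, ∃ x, c r x = v}
  have htriv : ∀ w ∈ φ.ker, ∀ x : X, w • x = x := by
    intro w hw x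
    induction x using QuotientGroup.induction_on with
    | H g =>
      rw [MulAction.Quotient.smul_coe, smul_eq_mul, eq_comm, QuotientGroup.eq, Subgroup.mem_comap]
      simp [MonoidHom.mem_ker.1 hw]
  have hRker : R ⊆ φ.ker := hker ▸ Subgroup.subset_normalClosure
  let mkV := (Submodule.span ℤ V).mkQ
  have hm : IsActionCocycle fun w x => mkV (c w x) := hc.comp mkV.toAddMonoidHom
  have hkernel : φ.ker ≤ hm.kernel := by
    rw [hker]
    refine Subgroup.normalClosure_le_normal fun r hr x => ⟨htriv r (hRker hr) x, ?_⟩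
    exact (Submodule.Quotient.mk_eq_zero _).2 (Submodule.subset_span ⟨r, hr, x, rfl⟩)
  let ρ' := (Submodule.span ℤ V).liftQ ρ (Submodule.span_le.2 (by
    rintro _ ⟨r, hr, x, rfl⟩
    exact (hρ r x).trans (hdker r x (hRker hr) (htriv r (hRker hr) x))))
  let x₀ : X := ((1 : FreeGroup α) : X)
  let θ : H.comap φ →* Multiplicative ((α × X → ℤ) ⧸ Submodule.span ℤ V) :=
    { toFun := fun w => .ofAdd (mkV (c w x₀))
      map_one' := by simp [hc.map_one]
      map_mul' := fun w w' => by
        have hx : (w' : FreeGroup α) • x₀ = x₀ := by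
          rw [MulAction.Quotient.smul_coe, smul_eq_mul, mul_one, eq_comm, QuotientGroup.eq]
          simp
        rw [← ofAdd_add, Subgroup.coe_mul, hc, hx, map_add] }
  have hsurj := φ.subgroupComap_surjective_of_surjective H hφ
  let θH : H →* Multiplicative ((α × X → ℤ) ⧸ Submodule.span ℤ V) :=
    (φ.subgroupComap H).liftOfSurjective hsurj ⟨θ, fun w hw => by
      have hw' : (w : FreeGroup α) ∈ φ.ker := by
        exact congrArg Subtype.val (MonoidHom.mem_ker.1 hw)
      exact congrArg Multiplicative.ofAdd (hkernel hw' x₀).2⟩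
  let f : Additive (Abelianization H) →+ (α × X → ℤ) ⧸ Submodule.span ℤ V :=
    MonoidHom.toAdditiveLeft (Abelianization.lift θH)
  have hf : Function.LeftInverse ρ' f := by
    intro a
    obtain ⟨h, rfl⟩ : ∃ h : H, Additive.ofMul (Abelianization.of h) = a :=
      QuotientGroup.mk_surjective a
    obtain ⟨w, rfl⟩ := hsurj h
    have hfw : f (Additive.ofMul (Abelianization.of (φ.subgroupComap H w))) = mkV (c w x₀) := by
      have : θH (φ.subgroupComap H w) = θ w :=
        (φ.subgroupComap H).liftOfRightInverse_comp_apply _ _ _ w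
      exact congrArg Multiplicative.toAdd this
    rw [hfw]
    exact (hρ w x₀).trans (hdbase w w.2)
  have hcard := card_le_pow_of_injective_quotient_span V L hL ?_ f hf.injective
  · rw [Fintype.card_prod, ← Nat.card_eq_fintype_card (α := X)] at hcard
    rw [← hindex]
    exact hcard
  · rintro _ ⟨r, hr, x, rfl⟩
    refine (hc.sum_abs_le_norm (fun s x => ?_) r x).trans (by exact_mod_cast hR r hr)
    rw [hcgen, Finset.sum_eq_single (s, x)] <;> simp +contextual

/-- **Proposition 6.1.** Let `G` be a finitely presented group.  Then there is a
constant `k > 1` such that for every finite index subgroup `H` of `G`, either the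
abelianisation `H/[H,H]` is infinite, or `|H/[H,H]| ≤ k^[G:H]`. -/
theorem stmt13 (G : Type*) [Group G] (hG : IsFinitelyPresented G) :
    ∃ k : ℝ, 1 < k ∧ ∀ H : Subgroup G, H.FiniteIndex →
      (Infinite (Abelianization ↥H) ∨
        (Nat.card (Abelianization ↥H) : ℝ) ≤ k ^ H.index) := by
  obtain ⟨n, φ, R, hφ, hker⟩ := hG
  let L : ℕ := R.sup FreeGroup.norm + 2
  refine ⟨(L : ℝ) ^ (n + 1), one_lt_pow₀ (by norm_cast; omega) n.succ_ne_zero, fun H hH => ?_⟩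
  rcases finite_or_infinite (Abelianization H) with hfin | hinf
  swap
  · exact .inl hinf
  right
  have h := card_abelianization_le_pow φ hφ R hker L (by omega)
    (fun r hr => (Finset.le_sup (f := FreeGroup.norm) hr).trans (Nat.le_add_right _ 2)) H
  rw [Fintype.card_fin] at h
  rw [← pow_mul]
  exact_mod_cast h.trans
    (Nat.pow_le_pow_right (by omega) (Nat.mul_le_mul_right _ n.le_succ))
end

section
/- Let G be a group with a finite presentation having g generators and r relations, and let H be a finite index subgroup of G. Then the abelianisation H/[H,H] contains a free abelian direct summand of rank (g − 1 − r)[G : H] + 1; in particular, if g − r ≥ 2 then every finite index subgroup of G has infinite abelianisation. -/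
/-- The derivations (crossed homomorphisms) of `F` with values in the permutation module `X → ℚ`,
where `F` acts on `X` through `π`. -/
def permDerivations {F G : Type*} [Group F] [Group G] (π : F →* G) (X : Type*) [MulAction G X] :
    Submodule ℚ (F → X → ℚ) where
  carrier := {f | ∀ x y z, f (x * y) z = f x z + f y ((π x)⁻¹ • z)}
  add_mem' {f g} hf hg x y z := by
    simp only [Pi.add_apply, hf x y z, hg x y z]
    ring
  zero_mem' _ _ _ := by simp
  smul_mem' c f hf x y z := by simp only [Pi.smul_apply, hf x y z, smul_add]

/-- A derivation of a free group can be prescribed arbitrarily on the generators. -/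
theorem exists_permDerivations_apply_of {α G X : Type*} [Group G] [MulAction G X]
    (π : FreeGroup α →* G) (u : α → X → ℚ) :
    ∃ f ∈ permDerivations π X, ∀ a, f (FreeGroup.of a) = u a := by
  let Φ : FreeGroup α →* (X → Multiplicative ℚ) ⋊[mulAutArrow] G :=
    FreeGroup.lift fun a => ⟨fun z => Multiplicative.ofAdd (u a z), π (FreeGroup.of a)⟩
  have hΦ : ∀ x, (Φ x).right = π x := fun x =>
    DFunLike.congr_fun (show SemidirectProduct.rightHom.comp Φ = π by ext a; simp [Φ]) x
  refine ⟨fun x z => ((Φ x).left z).toAdd, fun x y z => ?_, fun a => ?_⟩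
  · beta_reduce
    rw [map_mul, SemidirectProduct.mul_left, hΦ]
    rfl
  · simp [Φ]

section

variable {F G X : Type*} [Group F] [Group G] [MulAction G X] {π : F →* G} {f : F → X → ℚ}

theorem permDerivations_apply_one (hf : f ∈ permDerivations π X) (z : X) : f 1 z = 0 := by
  simpa using hf 1 1 z

/-- A derivation vanishing on a subset of the kernel of the action vanishes on its normal
closure. -/
theorem permDerivations_eq_zero_of_mem_normalClosure (hf : f ∈ permDerivations π X) {R : Set F}
    (hR : Subgroup.normalClosure R ≤ π.ker) (hfR : ∀ r ∈ R, f r = 0) {x : F}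
    (hx : x ∈ Subgroup.normalClosure R) : f x = 0 := by
  have hker : ∀ {y}, y ∈ Subgroup.normalClosure R → π y = 1 := fun h => hR h
  have hinv : ∀ y z, f y z + f y⁻¹ ((π y)⁻¹ • z) = 0 := fun y z => by
    rw [← hf, mul_inv_cancel, permDerivations_apply_one hf]
  let N : Subgroup F :=
    { carrier := {x | π x = 1 ∧ f x = 0}
      mul_mem' := fun {a b} ha hb => by
        refine ⟨by simp [ha.1, hb.1], funext fun z => ?_⟩
        rw [hf, ha.2, hb.2]
        simp
      one_mem' := ⟨map_one π, funext fun z => permDerivations_apply_one hf z⟩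
      inv_mem' := fun {a} ha => by
        refine ⟨by simp [ha.1], funext fun z => ?_⟩
        simpa [ha.1, ha.2] using hinv a z }
  have hN : N.Normal := ⟨fun n hn y => by
    refine ⟨by simp [hn.1], funext fun z => ?_⟩
    rw [hf, hf, hn.2]
    simpa [hn.1] using hinv y z⟩
  exact (Subgroup.normalClosure_le_normal (N := N)
    (fun r hr => ⟨hker (Subgroup.subset_normalClosure hr), hfR r hr⟩) hx).2

end

/-- If the homomorphisms `H → ℚ` are determined by their values on `m` elements, then
`|α| [G : H] + 1 ≤ |Rel| [G : H] + [G : H] + m`. -/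
theorem card_mul_index_add_one_le {G : Type*} [Group G] {α : Type*} [Fintype α]
    (π : FreeGroup α →* G) (hsurj : Function.Surjective π) (Rel : Finset (FreeGroup α))
    (hker : π.ker = Subgroup.normalClosure (Rel : Set (FreeGroup α)))
    (H : Subgroup G) [H.FiniteIndex] {m : ℕ} (b : Fin m → H)
    (hb : ∀ φ : H →* Multiplicative ℚ, (∀ i, φ (b i) = 1) → φ = 1) :
    Fintype.card α * H.index + 1 ≤ Rel.card * H.index + H.index + m := by
  classical
  let X := G ⧸ H
  let _ : Fintype X := H.fintypeQuotientOfFiniteIndex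
  let o : X := ((1 : G) : X)
  obtain ⟨s, hs⟩ := hsurj.hasRightInverse
  let D := permDerivations π X
  let res : D →ₗ[ℚ] (α → X → ℚ) :=
    { toFun := fun f a => f.1 (FreeGroup.of a)
      map_add' := fun _ _ => rfl
      map_smul' := fun _ _ => rfl }
  have hres : LinearMap.range res = ⊤ := LinearMap.range_eq_top.2 fun u => by
    obtain ⟨f, hf, h⟩ := exists_permDerivations_apply_of π u
    exact ⟨⟨f, hf⟩, funext h⟩
  obtain ⟨σ, hσ⟩ := res.exists_rightInverse_of_surjective hres
  have hσinj : Function.Injective σ :=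
    Function.LeftInverse.injective (g := res) fun u => LinearMap.congr_fun hσ u
  let ev : D →ₗ[ℚ] (Rel → X → ℚ) × (Fin m → ℚ) × ({z : X // z ≠ o} → ℚ) :=
    { toFun := fun f =>
        (fun r => f.1 r, fun i => f.1 (s (b i)) o, fun z => f.1 (s z.1.out) z.1)
      map_add' := fun _ _ => rfl
      map_smul' := fun _ _ => rfl }
  have hH : ∀ h : H, (h : G)⁻¹ • o = o := fun h =>
    (QuotientGroup.eq (s := H)).2 (by simp)
  have hev : Function.Injective ev := by
    rw [injective_iff_map_eq_zero]
    rintro ⟨f, hf⟩ h0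
    simp only [ev, LinearMap.coe_mk, AddHom.coe_mk, Prod.mk_eq_zero] at h0
    obtain ⟨hR, hi, hz⟩ := h0
    have hkf : ∀ x, π x = 1 → f x = 0 := fun x hx =>
      permDerivations_eq_zero_of_mem_normalClosure hf hker.ge
        (fun r hr => congrFun hR ⟨r, hr⟩) (hker ▸ hx)
    have hπ : ∀ x y, π x = π y → f x = f y := fun x y hxy => by
      funext z
      have := hf y (y⁻¹ * x) z
      rw [mul_inv_cancel_left, hkf (y⁻¹ * x) (by simp [hxy])] at this
      simpa using this
    let φ : H →* Multiplicative ℚ := MonoidHom.mk' (fun h => Multiplicative.ofAdd (f (s h) o))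
      fun x y => by
        rw [← ofAdd_add]
        congr 1
        rw [hπ (s ((x * y : H) : G)) (s x * s y) (by simp [hs _]), hf, hs, hH]
    have hφ : φ = 1 := hb φ fun i => congrFun hi i
    have hfo : ∀ x, π x ∈ H → f x o = 0 := fun x hx => by
      rw [← hπ (s (π x)) x (hs _)]
      exact DFunLike.congr_fun hφ ⟨π x, hx⟩
    have hout : ∀ z : X, f (s z.out) z = 0 := fun z => by
      by_cases h : z = o
      · subst h
        refine hfo _ ?_
        rw [hs]
        simpa [o] using (QuotientGroup.eq (s := H)).1 (Quotient.out_eq' o)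
      · exact congrFun hz ⟨z, h⟩
    have hval : ∀ x (z : X), π x • o = z → f x z = 0 := fun x z hxz => by
      have hzo : (π (s z.out))⁻¹ • z = o := by
        rw [hs, inv_smul_eq_iff]
        conv_lhs => rw [← Quotient.out_eq' z]
        exact congrArg (QuotientGroup.mk (s := H)) (mul_one _).symm
      have := hf (s z.out) ((s z.out)⁻¹ * x) z
      rw [mul_inv_cancel_left, hout, hzo, hfo, add_zero] at this
      · exact this
      · rw [← inv_mem_iff]
        have h1 : (π ((s z.out)⁻¹ * x)) • o = o := by
          rw [map_mul, map_inv, mul_smul, hxz, hzo]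
        have h2 := (QuotientGroup.eq (s := H)).1 h1
        simpa using h2
    refine Subtype.ext (funext fun x => funext fun z => ?_)
    obtain ⟨g, rfl⟩ := QuotientGroup.mk_surjective z
    have hgo : π (s g) • o = (g : X) := by
      rw [hs]
      exact congrArg (QuotientGroup.mk (s := H)) (mul_one _)
    have h1 := hf x (x⁻¹ * s g) g
    rw [mul_inv_cancel_left, hval _ _ hgo, hval (x⁻¹ * s g), add_zero] at h1
    · exact h1.symm
    · rw [map_mul, map_inv, mul_smul, hgo]
  have hle := LinearMap.finrank_le_finrank_of_injective (f := ev ∘ₗ σ) (hev.comp hσinj)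
  have hX : Fintype.card X = H.index := by
    rw [Subgroup.index, Nat.card_eq_fintype_card]
  have hX' : Fintype.card {z : X // z ≠ o} + 1 = H.index := by
    rw [← hX, Fintype.card_subtype_compl, Fintype.card_subtype_eq]
    exact Nat.sub_add_cancel (Fintype.card_pos_iff.2 ⟨o⟩)
  simp only [Module.finrank_prod, Module.finrank_pi_fintype, Module.finrank_self, Finset.sum_const,
    Finset.card_univ, smul_eq_mul, mul_one, Fintype.card_coe, Fintype.card_fin, hX] at hle
  omega

/-- A finitely generated abelian group has a free direct summand on which every homomorphism to `ℚ`
is determined. -/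
theorem AddCommGroup.exists_free_summand_detecting (A : Type*) [AddCommGroup A] [AddGroup.FG A] :
    ∃ (m : ℕ) (p : A →+ (Fin m → ℤ)) (s : (Fin m → ℤ) →+ A), (∀ v, p (s v) = v) ∧
      ∀ φ : A →+ ℚ, (∀ i, φ (s (Pi.single i 1)) = 0) → φ = 0 := by
  classical
  obtain ⟨m, ι, _, q, hq, e, ⟨E⟩⟩ := AddCommGroup.equiv_free_prod_directSum_zmod A
  let L : (Fin m →₀ ℤ) ≃+ (Fin m → ℤ) := (Finsupp.linearEquivFunOnFinite ℤ ℤ (Fin m)).toAddEquiv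
  refine ⟨m, L.toAddMonoidHom.comp ((AddMonoidHom.fst _ _).comp E.toAddMonoidHom),
    E.symm.toAddMonoidHom.comp ((AddMonoidHom.inl _ _).comp L.symm.toAddMonoidHom),
    fun v => by simp,
    fun φ hφ => ?_⟩
  have hfree : ∀ v, φ (E.symm (v, 0)) = 0 := by
    have : φ.comp (E.symm.toAddMonoidHom.comp (AddMonoidHom.inl _ _)) = 0 := by
      ext i
      have h := hφ i
      have hL : L.symm (Pi.single i 1) = Finsupp.single i 1 := by
        rw [AddEquiv.symm_apply_eq]
        exact (Finsupp.linearEquivFunOnFinite_single ℤ ℤ (Fin m) i 1).symm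
      simpa [hL] using h
    exact fun v => DFunLike.congr_fun this v
  have htors : ∀ t, φ (E.symm (0, t)) = 0 := by
    have : φ.comp (E.symm.toAddMonoidHom.comp (AddMonoidHom.inr _ _)) = 0 := by
      refine DirectSum.addHom_ext fun i y => ?_
      have hn : q i ^ e i ≠ 0 := pow_ne_zero _ (hq i).ne_zero
      have h0 : (q i ^ e i) • y = 0 := by simp [nsmul_eq_mul]
      refine (smul_eq_zero_iff_right hn).1 ?_
      rw [← map_nsmul, ← map_nsmul, h0, map_zero, map_zero]
    exact fun t => DFunLike.congr_fun this t
  ext a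
  have ha : a = E.symm ((E a).1, 0) + E.symm (0, (E a).2) := by
    rw [← map_add]; simp
  rw [ha, map_add, hfree, htors]
  simp

/-- A retraction of groups splits a commutative group as a direct product. -/
theorem exists_summand_of_leftInverse {A N : Type*} [CommGroup A] [Group N] (p : A →* N)
    (s : N →* A) (h : Function.LeftInverse p s) :
    ∃ M B : Subgroup A, M ⊓ B = ⊥ ∧ M ⊔ B = ⊤ ∧ Nonempty (M ≃* N) := by
  refine ⟨s.range, p.ker, ?_, ?_, ⟨(MonoidHom.ofLeftInverse h).symm⟩⟩
  · refine (Subgroup.eq_bot_iff_forall _).2 ?_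
    rintro _ ⟨⟨n, rfl⟩, hn⟩
    have : n = 1 := (h n).symm.trans hn
    rw [this, map_one]
  · refine eq_top_iff.2 fun a _ => ?_
    rw [← mul_div_cancel (s (p a)) a]
    refine Subgroup.mul_mem_sup ⟨p a, rfl⟩ ?_
    rw [MonoidHom.mem_ker, map_div, h, div_self']


/-- Let `G` be a group with a finite presentation with `g` generators and `r` relations
(here `π` is the quotient map from the free group on the finite type `α` of generators,
with `g = |α|`, whose kernel is the normal closure of the finite set `Rel` of `r`
relations), and let `H` be a finite index subgroup of `G`.  Then the abelianisation of
`H` contains a free abelian direct summand of rank `(g - 1 - r)[G : H] + 1` (the claim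
being vacuous when this quantity is not a nonnegative integer `c`); in particular, if
`g - r ≥ 2` then `H` has infinite abelianisation. -/
theorem stmt16 (G : Type*) [Group G]
    (α : Type) [Fintype α]
    (π : FreeGroup α →* G) (hsurj : Function.Surjective π)
    (Rel : Finset (FreeGroup α))
    (hker : π.ker = Subgroup.normalClosure (Rel : Set (FreeGroup α)))
    (H : Subgroup G) (hH : H.FiniteIndex) :
    (∀ c : ℕ, (c : ℤ) = ((Fintype.card α : ℤ) - 1 - (Rel.card : ℤ)) * (H.index : ℤ) + 1 →
      ∃ M B : Subgroup (Abelianization ↥H),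
        M ⊓ B = ⊥ ∧ M ⊔ B = ⊤ ∧
        Nonempty (M ≃* Multiplicative (Fin c → ℤ))) ∧
    (Rel.card + 2 ≤ Fintype.card α → Infinite (Abelianization ↥H)) := by
  have := hH
  have : Group.FG G := Group.fg_of_surjective hsurj
  have : Group.FG (Abelianization H) := QuotientGroup.fg _
  obtain ⟨m, p, s, hps, hdet⟩ :=
    AddCommGroup.exists_free_summand_detecting (Additive (Abelianization H))
  choose b hb using fun i : Fin m =>
    show ∃ h : H, Abelianization.of h = (s (Pi.single i 1)).toMul from
      QuotientGroup.mk_surjective _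
  have hbound := card_mul_index_add_one_le π hsurj Rel hker H b fun φ hφ => by
    have h := hdet (MonoidHom.toAdditiveLeft (Abelianization.lift φ)) fun i => by
      have := hφ i
      rw [← Abelianization.lift_apply_of φ, hb] at this
      exact this
    ext x
    exact DFunLike.congr_fun h (Additive.ofMul (Abelianization.of x))
  have hmain : ∀ c : ℕ,
      (c : ℤ) = ((Fintype.card α : ℤ) - 1 - (Rel.card : ℤ)) * (H.index : ℤ) + 1 →
      ∃ M B : Subgroup (Abelianization ↥H),
        M ⊓ B = ⊥ ∧ M ⊔ B = ⊤ ∧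
        Nonempty (M ≃* Multiplicative (Fin c → ℤ)) := fun c hc => by
    have hcm : c ≤ m := by
      zify at hbound ⊢
      linarith
    let j := Fin.castLE hcm
    have hj : Function.Injective j := Fin.castLE_injective hcm
    let p' : Additive (Abelianization H) →+ (Fin c → ℤ) :=
      (LinearMap.funLeft ℤ ℤ j).toAddMonoidHom.comp p
    let s' : (Fin c → ℤ) →+ Additive (Abelianization H) :=
      s.comp (Function.ExtendByZero.linearMap ℤ j).toAddMonoidHom
    refine exists_summand_of_leftInverse (AddMonoidHom.toMultiplicativeRight p')
      (AddMonoidHom.toMultiplicativeLeft s') fun v => ?_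
    change p (s (Function.extend j v 0)) ∘ j = v
    rw [hps]
    exact Function.extend_comp hj v 0
  refine ⟨hmain, fun hgr => ?_⟩
  obtain ⟨d, hd⟩ := Nat.exists_eq_add_of_le hgr
  obtain ⟨M, -, -, -, ⟨e⟩⟩ := hmain ((d + 1) * H.index + 1) (by
    rw [hd]
    push_cast
    ring)
  have : Infinite M := e.toEquiv.infinite_iff.2
    (inferInstanceAs (Infinite (Fin ((d + 1) * H.index + 1) → ℤ)))
  exact Infinite.of_injective _ M.subtype_injective
end
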